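/- arXiv:1703.02586 — 3 statements merged into one kernel-verified Lean document; each statement's English description precedes it below -/
import Mathlib

section
/- Let n ≥ 1 and d ≥ 2 be integers. The reduced simplicial homology of the (d−2)-independence complex of the path on n vertices with rational coefficients is that of a sphere or a point: H̃_j(Ind_{d−2}(A_n); ℚ) ≅ ℚ if there exists an integer k ≥ 1 with (n = dk or n = dk − 1) and j = k(d − 2) − 1, and H̃_j(Ind_{d−2}(A_n); ℚ) = 0 in all other cases (in particular, all reduced homology vanishes when n ≡ r mod d with 1 ≤ r ≤ d − 2). -/
noncomputable section

/-- Every maximal run of consecutive integers in `σ` has size at most `r`. -/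
def RunsLE (r : ℕ) (σ : Finset ℕ) : Prop :=
  ∀ a : ℕ, ¬ Finset.Icc a (a + r) ⊆ σ

section QuotientHelpers

variable {S M : Type} [CommRing S] [AddCommGroup M] [Module S M]

/-- The kernel of an endomorphism (instance-explicit helper). -/
def kerOf (f : M →ₗ[S] M) : Submodule S M := LinearMap.ker f

/-- The image of a submodule under an endomorphism (instance-explicit helper). -/
def mapOf (f : M →ₗ[S] M) (P : Submodule S M) : Submodule S M := P.map f

/-- `Q`, viewed inside the submodule `P` (instance-explicit helper). -/
def inSub (P Q : Submodule S M) : Submodule S ↥P := Q.comap P.subtype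

/-- The quotient of a module by a submodule (instance-explicit helper). -/
def modQuot (N : Submodule S M) : Type := M ⧸ N

noncomputable instance (N : Submodule S M) : AddCommGroup (modQuot N) :=
  inferInstanceAs (AddCommGroup (M ⧸ N))

noncomputable instance (N : Submodule S M) : Module S (modQuot N) :=
  inferInstanceAs (Module S (M ⧸ N))

/-- The subquotient `(P ∩ ker f) / (f(P') ∩ _)` used to define homology:
cycles in `P` modulo boundaries coming from `P'`. -/
def homologyOf (f : M →ₗ[S] M) (P P' : Submodule S M) : Type :=
  modQuot (inSub (kerOf f ⊓ P) (mapOf f P'))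

noncomputable instance (f : M →ₗ[S] M) (P P' : Submodule S M) :
    AddCommGroup (homologyOf f P P') :=
  inferInstanceAs (AddCommGroup (modQuot _))

noncomputable instance (f : M →ₗ[S] M) (P P' : Submodule S M) :
    Module S (homologyOf f P P') :=
  inferInstanceAs (Module S (modQuot _))

end QuotientHelpers

variable (S : Type) [CommRing S] (A : Type) [CommRing A] [Algebra S A]

/-- The boundary of a single face `σ = {v_0 < ⋯ < v_k}` in the augmented
simplicial chain complex: `∑ (-1)^i (σ \ {v_i})`, as a linear map on the
coefficients. -/
def sBnd (σ : Finset ℕ) : A →ₗ[S] ((Finset ℕ) →₀ A) :=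
  ∑ v ∈ σ, ((-1 : ℤ) ^ ((σ.filter (· < v)).card)) •
    (Finsupp.lsingle (σ.erase v) : A →ₗ[S] ((Finset ℕ) →₀ A))

/-- The boundary operator of the augmented simplicial chain complex with
coefficients in `A`, on the free `A`-module on all finite subsets of `ℕ`. -/
def sD : ((Finset ℕ) →₀ A) →ₗ[S] ((Finset ℕ) →₀ A) :=
  Finsupp.lsum ℕ (sBnd S A)

/-- The chains of degree `j` of the complex with faces `F` (the face `∅` has
degree `-1`): the chains supported on the faces of `F` with `j + 1` elements. -/
def sDeg (F : Set (Finset ℕ)) (j : ℤ) : Submodule S ((Finset ℕ) →₀ A) :=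
  Finsupp.supported A S {σ | σ ∈ F ∧ (σ.card : ℤ) = j + 1}

/-- The reduced simplicial homology `H̃_j` of the simplicial complex with set
of faces `F` (augmented by the empty face), with coefficients in `A`:
cycles of degree `j` modulo boundaries of chains of degree `j + 1`. -/
def SH (F : Set (Finset ℕ)) (j : ℤ) : Type :=
  homologyOf (sD S A) (sDeg S A F j) (sDeg S A F (j + 1))

noncomputable instance (F : Set (Finset ℕ)) (j : ℤ) : AddCommGroup (SH S A F j) :=
  inferInstanceAs (AddCommGroup (homologyOf _ _ _))

noncomputable instance (F : Set (Finset ℕ)) (j : ℤ) : Module S (SH S A F j) :=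
  inferInstanceAs (Module S (homologyOf _ _ _))

end

/-- The faces of the independence complex `Ind_r(A_n)` (together with the
empty face): the subsets of `{1, …, n}` all of whose maximal runs of
consecutive integers have size at most `r`. -/
def IndFaces (r n : ℕ) : Set (Finset ℕ) :=
  {σ | ↑σ ⊆ Finset.Icc 1 n ∧ RunsLE r σ}

section HomologyOf

variable {S M N : Type} [CommRing S] [AddCommGroup M] [Module S M] [AddCommGroup N] [Module S N]

/-- A linear map that is surjective on cycles and vanishes exactly on the cycles which are
boundaries identifies the homology with its target. -/
theorem homologyOf_equiv_of_surjective (f : M →ₗ[S] M) (P P' : Submodule S M)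
    (ψ : ↥(kerOf f ⊓ P) →ₗ[S] N) (hsurj : Function.Surjective ψ)
    (hker : ∀ z, ψ z = 0 ↔ ∃ e ∈ P', f e = (z : M)) :
    Nonempty (homologyOf f P P' ≃ₗ[S] N) := by
  have h : inSub (kerOf f ⊓ P) (mapOf f P') = LinearMap.ker ψ := by
    ext z
    rw [LinearMap.mem_ker, hker]
    rfl
  exact ⟨(Submodule.quotEquivOfEq _ _ h).trans (ψ.quotKerEquivOfSurjective hsurj)⟩

/-- A linear map that restricts to a surjection on cycles and detects boundaries induces an
isomorphism on homology. -/
theorem homologyOf_equiv_homologyOf (f : M →ₗ[S] M) (P P' : Submodule S M)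
    (g : N →ₗ[S] N) (Q Q' : Submodule S N) (φ : M →ₗ[S] N)
    (hφ : ∀ z ∈ P, f z = 0 → g (φ z) = 0 ∧ φ z ∈ Q)
    (hsurj : ∀ y ∈ Q, g y = 0 → ∃ z ∈ P, f z = 0 ∧ φ z = y)
    (hbdry : ∀ z ∈ P, f z = 0 → ((∃ e ∈ Q', g e = φ z) ↔ ∃ e ∈ P', f e = z)) :
    Nonempty (homologyOf f P P' ≃ₗ[S] homologyOf g Q Q') := by
  let ρ : ↥(kerOf f ⊓ P) →ₗ[S] ↥(kerOf g ⊓ Q) :=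
    φ.restrict fun z hz => hφ z hz.2 hz.1
  let q : ↥(kerOf g ⊓ Q) →ₗ[S] homologyOf g Q Q' :=
    (inSub (kerOf g ⊓ Q) (mapOf g Q')).mkQ
  refine homologyOf_equiv_of_surjective f P P' (q ∘ₗ ρ) ?_ ?_
  · refine (Submodule.mkQ_surjective _).comp ?_
    rintro ⟨y, hy⟩
    obtain ⟨z, hzP, hz0, rfl⟩ := hsurj y hy.2 hy.1
    exact ⟨⟨z, hz0, hzP⟩, rfl⟩
  · rintro ⟨z, hz⟩
    rw [← hbdry z hz.2 hz.1]
    exact Submodule.Quotient.mk_eq_zero _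

theorem subsingleton_homologyOf (f : M →ₗ[S] M) (P P' : Submodule S M)
    (h : ∀ z ∈ P, f z = 0 → ∃ e ∈ P', f e = z) : Subsingleton (homologyOf f P P') := by
  obtain ⟨e⟩ := homologyOf_equiv_of_surjective f P P'
    (0 : ↥(kerOf f ⊓ P) →ₗ[S] PUnit.{1}) (fun _ => ⟨0, rfl⟩)
    (fun z => ⟨fun _ => h z z.2.2 z.2.1, fun _ => rfl⟩)
  exact e.toEquiv.subsingleton

end HomologyOf

section Chains

variable (S : Type) [CommRing S] (A : Type) [CommRing A] [Algebra S A]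

theorem sD_single (σ : Finset ℕ) (a : A) :
    sD S A (Finsupp.single σ a) =
      ∑ v ∈ σ, ((-1 : ℤ) ^ (σ.filter (· < v)).card) • Finsupp.single (σ.erase v) a := by
  simp [sD, sBnd]

variable {S A} in
/-- A linear map sends a chain into a submodule as soon as it does so on the faces
supporting the chain. -/
theorem map_mem_of_mem_sDeg {M : Type} [AddCommGroup M] [Module S M]
    {F : Set (Finset ℕ)} {j : ℤ} (f : ((Finset ℕ) →₀ A) →ₗ[S] M) (P : Submodule S M)
    (h : ∀ σ ∈ F, (σ.card : ℤ) = j + 1 → ∀ a, f (Finsupp.single σ a) ∈ P)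
    {z : (Finset ℕ) →₀ A} (hz : z ∈ sDeg S A F j) : f z ∈ P := by
  rw [← Finsupp.sum_single z, Finsupp.sum, map_sum]
  refine P.sum_mem fun σ hσ => ?_
  have hσ' := (Finsupp.mem_supported S z).1 hz hσ
  exact h σ hσ'.1 hσ'.2 _

theorem single_mem_sDeg {F : Set (Finset ℕ)} {j : ℤ} {σ : Finset ℕ} (hσ : σ ∈ F)
    (hc : (σ.card : ℤ) = j + 1) (a : A) : Finsupp.single σ a ∈ sDeg S A F j :=
  Finsupp.single_mem_supported S a ⟨hσ, hc⟩

theorem sDeg_mono {F G : Set (Finset ℕ)} (h : F ⊆ G) {j : ℤ} : sDeg S A F j ≤ sDeg S A G j :=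
  Finsupp.supported_mono (Set.inter_subset_inter_left _ h)

theorem sD_mem_sDeg {F : Set (Finset ℕ)} (hF : IsLowerSet F) {j : ℤ} {z : (Finset ℕ) →₀ A}
    (hz : z ∈ sDeg S A F (j + 1)) : sD S A z ∈ sDeg S A F j := by
  refine map_mem_of_mem_sDeg _ _ (fun σ hσ hc a => ?_) hz
  rw [sD_single]
  refine Submodule.sum_mem _ fun v hv => zsmul_mem (single_mem_sDeg S A
    (hF (Finset.erase_subset v σ) hσ) ?_ a) _
  have := Finset.card_erase_add_one hv
  lia

/-- The operator adjoining the vertex `m` to each face. -/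
noncomputable def coneMap (m : ℕ) : ((Finset ℕ) →₀ A) →ₗ[S] ((Finset ℕ) →₀ A) :=
  Finsupp.lsum ℕ fun σ => if m ∈ σ then 0 else Finsupp.lsingle (insert m σ)

theorem coneMap_single (m : ℕ) (σ : Finset ℕ) (a : A) :
    coneMap S A m (Finsupp.single σ a) =
      if m ∈ σ then 0 else Finsupp.single (insert m σ) a := by
  by_cases h : m ∈ σ <;> simp [coneMap, h]

theorem coneMap_coneMap (m : ℕ) (z : (Finset ℕ) →₀ A) :
    coneMap S A m (coneMap S A m z) = 0 := by
  induction z using Finsupp.induction_linear with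
  | zero => simp
  | add x y hx hy => simp [hx, hy]
  | single σ a => by_cases h : m ∈ σ <;> simp [coneMap_single, h]

theorem sD_single_insert {m : ℕ} {σ : Finset ℕ} (h : ∀ x ∈ σ, m < x) (a : A) :
    sD S A (Finsupp.single (insert m σ) a) =
      Finsupp.single σ a - coneMap S A m (sD S A (Finsupp.single σ a)) := by
  have hm : m ∉ σ := fun hm => (h m hm).false
  rw [sD_single, sD_single, Finset.sum_insert hm, Finset.erase_insert hm, map_sum,
    sub_eq_add_neg, ← Finset.sum_neg_distrib]
  congr 1
  · have : (insert m σ).filter (· < m) = ∅ := by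
      ext x
      simp only [Finset.mem_filter, Finset.mem_insert, Finset.notMem_empty, iff_false]
      rintro ⟨rfl | hx, hlt⟩
      · exact hlt.false
      · exact (h x hx).asymm hlt
    simp [this]
  · refine Finset.sum_congr rfl fun v hv => ?_
    have hmv : m < v := h v hv
    rw [map_zsmul, coneMap_single, if_neg (fun h' => hm (Finset.mem_of_mem_erase h')),
      Finset.erase_insert_of_ne hmv.ne, Finset.filter_insert, if_pos hmv,
      Finset.card_insert_of_notMem (fun h' => hm (Finset.mem_filter.1 h').1), pow_succ]
    simp

theorem sD_sD (z : (Finset ℕ) →₀ A) : sD S A (sD S A z) = 0 := by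
  induction z using Finsupp.induction_linear with
  | zero => simp
  | add x y hx hy => simp [hx, hy]
  | single σ a =>
    induction σ using Finset.induction_on_min with
    | empty => simp [sD_single]
    | insert m σ h ih =>
      have key : ∀ y ∈ sDeg S A {τ | ∀ x ∈ τ, m < x} ((σ.card : ℤ) - 1 - 1),
          sD S A (coneMap S A m y) = y - coneMap S A m (sD S A y) := by
        intro y hy
        have := map_mem_of_mem_sDeg
          (sD S A ∘ₗ coneMap S A m - (LinearMap.id - coneMap S A m ∘ₗ sD S A)) ⊥
          (fun τ hτ _ b => by
            have hmτ : m ∉ τ := fun h' => (hτ m h').false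
            simp [coneMap_single, hmτ, sD_single_insert S A hτ]) hy
        simpa [sub_eq_zero] using this
      rw [sD_single_insert S A h, map_sub, key, ih]
      · simp
      · refine sD_mem_sDeg S A (F := {τ | ∀ x ∈ τ, m < x})
          (fun τ ρ hle (hτ : ∀ x ∈ τ, m < x) x hx => hτ x (hle hx)) ?_
        exact single_mem_sDeg S A (F := {τ | ∀ x ∈ τ, m < x}) h (by ring) a

theorem sD_coneMap_single {m : ℕ} {σ : Finset ℕ} (h : ∀ x ∈ σ, m ≤ x) (a : A) :
    sD S A (coneMap S A m (Finsupp.single σ a)) =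
      Finsupp.single σ a - coneMap S A m (sD S A (Finsupp.single σ a)) := by
  by_cases hm : m ∈ σ
  · have h' : ∀ x ∈ σ.erase m, m < x := fun x hx =>
      lt_of_le_of_ne (h x (Finset.mem_of_mem_erase hx)) (Finset.ne_of_mem_erase hx).symm
    have := sD_single_insert S A h' a
    rw [Finset.insert_erase hm] at this
    rw [this, map_sub, coneMap_coneMap, coneMap_single, coneMap_single, if_pos hm,
      if_neg (Finset.notMem_erase m σ), Finset.insert_erase hm]
    simp
  · rw [coneMap_single, if_neg hm]
    exact sD_single_insert S A
      (fun x hx => lt_of_le_of_ne (h x hx) (by rintro rfl; exact hm hx)) a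

/-- A complex that is a cone with apex its least vertex is acyclic. -/
theorem exists_sD_eq_of_cone {F : Set (Finset ℕ)} {m : ℕ} (hle : ∀ σ ∈ F, ∀ x ∈ σ, m ≤ x)
    (hF : ∀ σ ∈ F, insert m σ ∈ F) {j : ℤ} {z : (Finset ℕ) →₀ A}
    (hz : z ∈ sDeg S A F j) (hz0 : sD S A z = 0) :
    ∃ e ∈ sDeg S A F (j + 1), sD S A e = z := by
  refine ⟨coneMap S A m z, map_mem_of_mem_sDeg _ _ (fun σ hσ hc a => ?_) hz, ?_⟩
  · rw [coneMap_single]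
    split_ifs with hm
    · exact zero_mem _
    · refine single_mem_sDeg S A (hF σ hσ) ?_ a
      rw [Finset.card_insert_of_notMem hm]
      push_cast
      lia
  · have := map_mem_of_mem_sDeg
      (sD S A ∘ₗ coneMap S A m - (LinearMap.id - coneMap S A m ∘ₗ sD S A)) ⊥
      (fun σ hσ _ a => by simp [sD_coneMap_single S A (hle σ hσ)]) hz
    simpa [hz0, sub_eq_zero] using this

end Chains

section PathComplex

theorem isLowerSet_IndFaces (r n : ℕ) : IsLowerSet (IndFaces r n) :=
  fun _ _ hle hσ => ⟨(Finset.coe_subset.2 hle).trans hσ.1, fun a ha => hσ.2 a (ha.trans hle)⟩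

/-- The closed star of the vertex `1` in `Ind_r(A_n)`. -/
def IndStar (r n : ℕ) : Set (Finset ℕ) := {σ | insert 1 σ ∈ IndFaces r n}

theorem isLowerSet_IndStar (r n : ℕ) : IsLowerSet (IndStar r n) :=
  fun _ _ hle hσ => isLowerSet_IndFaces r n (Finset.insert_subset_insert 1 hle) hσ

theorem IndStar_subset (r n : ℕ) : IndStar r n ⊆ IndFaces r n :=
  fun σ hσ => isLowerSet_IndFaces r n (Finset.subset_insert 1 σ) hσ

theorem mem_IndFaces_iff {r n : ℕ} {σ : Finset ℕ} :
    σ ∈ IndFaces r n ↔ (∀ x ∈ σ, 1 ≤ x ∧ x ≤ n) ∧ ∀ a, ∃ x, a ≤ x ∧ x ≤ a + r ∧ x ∉ σ := by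
  simp only [IndFaces, RunsLE, Set.mem_ofPred_eq, Finset.not_subset, Finset.mem_Icc, and_assoc]
  simp only [Finset.subset_iff, Finset.mem_Icc]

/-- The face `{2, …, r + 1}` together with the translate of `τ` by `r + 2`. -/
def blockFace (r : ℕ) (τ : Finset ℕ) : Finset ℕ :=
  Finset.Icc 2 (r + 1) ∪ τ.map (addRightEmbedding (r + 2))

theorem mem_blockFace {r : ℕ} {τ : Finset ℕ} {x : ℕ} :
    x ∈ blockFace r τ ↔ (2 ≤ x ∧ x ≤ r + 1) ∨ ∃ y ∈ τ, y + (r + 2) = x := by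
  simp [blockFace]

theorem add_mem_blockFace {r : ℕ} {τ : Finset ℕ} {y : ℕ} :
    y + (r + 2) ∈ blockFace r τ ↔ y ∈ τ := by
  rw [mem_blockFace]
  constructor
  · rintro (h | ⟨y', hy', h⟩)
    · lia
    · rwa [show y = y' by lia]
  · exact fun h => Or.inr ⟨y, h, rfl⟩

theorem blockFace_injective (r : ℕ) : Function.Injective (blockFace r) := by
  intro τ τ' h
  ext y
  rw [← add_mem_blockFace (r := r), h, add_mem_blockFace]

theorem disjoint_block (r : ℕ) {τ : Finset ℕ} :
    Disjoint (Finset.Icc 2 (r + 1)) (τ.map (addRightEmbedding (r + 2))) := by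
  rw [Finset.disjoint_left]
  intro x hx hx'
  simp only [Finset.mem_Icc, Finset.mem_map, addRightEmbedding_apply] at hx hx'
  obtain ⟨y, -, h⟩ := hx'
  lia

theorem card_blockFace (r : ℕ) (τ : Finset ℕ) : (blockFace r τ).card = r + τ.card := by
  rw [blockFace, Finset.card_union_of_disjoint (disjoint_block r)]
  simp

theorem erase_insert_blockFace_mem_IndFaces {r n : ℕ} (hn : r + 1 ≤ n) {τ : Finset ℕ}
    (hτ : τ ∈ IndFaces r (n - (r + 2))) {v : ℕ} (hv : v ∈ Finset.Icc 1 (r + 1)) :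
    (insert 1 (blockFace r τ)).erase v ∈ IndFaces r n := by
  rw [Finset.mem_Icc] at hv
  rw [mem_IndFaces_iff] at hτ ⊢
  simp only [Finset.mem_erase, Finset.mem_insert, mem_blockFace]
  refine ⟨?_, fun a => ?_⟩
  · rintro x ⟨-, rfl | h | ⟨y, hy, rfl⟩⟩
    · lia
    · lia
    · have := hτ.1 y hy
      lia
  · rcases Nat.lt_or_ge (r + 2) a with ha | ha
    · obtain ⟨x, hx, hx', hxτ⟩ := hτ.2 (a - (r + 2))
      refine ⟨x + (r + 2), by lia, by lia, ?_⟩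
      rintro ⟨-, h | h | ⟨y, hy, h⟩⟩
      · lia
      · lia
      · exact hxτ (by rwa [show x = y by lia])
    · rcases Nat.lt_or_ge a 2 with h2 | h2
      · obtain rfl | rfl : a = 0 ∨ a = 1 := by lia
        · refine ⟨0, by lia, by lia, ?_⟩
          rintro ⟨-, h | h | ⟨y, hy, h⟩⟩ <;> lia
        · exact ⟨v, by lia, by lia, fun h => h.1 rfl⟩
      · refine ⟨r + 2, by lia, by lia, ?_⟩
        rintro ⟨-, h | h | ⟨y, hy, h⟩⟩
        · lia
        · lia
        · have := hτ.1 y hy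
          lia

theorem one_notMem_blockFace {r : ℕ} {τ : Finset ℕ} : 1 ∉ blockFace r τ := by
  rw [mem_blockFace]
  rintro (h | ⟨y, -, h⟩) <;> lia

theorem blockFace_mem_IndFaces {r n : ℕ} (hn : r + 1 ≤ n) {τ : Finset ℕ}
    (hτ : τ ∈ IndFaces r (n - (r + 2))) : blockFace r τ ∈ IndFaces r n := by
  have := erase_insert_blockFace_mem_IndFaces hn hτ (Finset.mem_Icc.2 ⟨le_rfl, by lia⟩)
  rwa [Finset.erase_insert one_notMem_blockFace] at this

theorem blockFace_erase_mem_IndStar {r n : ℕ} (hn : r + 1 ≤ n) {τ : Finset ℕ}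
    (hτ : τ ∈ IndFaces r (n - (r + 2))) {v : ℕ} (hv : v ∈ Finset.Icc 2 (r + 1)) :
    (blockFace r τ).erase v ∈ IndStar r n := by
  rw [Finset.mem_Icc] at hv
  have := erase_insert_blockFace_mem_IndFaces hn hτ
    (Finset.mem_Icc.2 ⟨by lia, hv.2⟩ : v ∈ Finset.Icc 1 (r + 1))
  rwa [Finset.erase_insert_of_ne (by lia)] at this

theorem blockFace_notMem_IndStar (r n : ℕ) (τ : Finset ℕ) : blockFace r τ ∉ IndStar r n := by
  intro h
  obtain ⟨x, hx, hx', hxn⟩ := (mem_IndFaces_iff.1 h).2 1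
  rw [Finset.mem_insert, mem_blockFace] at hxn
  lia

/-- The faces outside the closed star of the vertex `1` are those containing `{2, …, r + 1}`
but neither `1` nor `r + 2`. -/
theorem exists_blockFace_eq {r n : ℕ} (hn : 1 ≤ n) {σ : Finset ℕ} (hσ : σ ∈ IndFaces r n)
    (hσ' : σ ∉ IndStar r n) : ∃ τ ∈ IndFaces r (n - (r + 2)), blockFace r τ = σ := by
  have hσ'' : insert 1 σ ∉ IndFaces r n := hσ'
  rw [mem_IndFaces_iff] at hσ hσ''
  obtain ⟨hle, hruns⟩ := hσ
  have hrange : ∀ x ∈ insert 1 σ, 1 ≤ x ∧ x ≤ n := by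
    intro x hx
    rcases Finset.mem_insert.1 hx with rfl | hx
    · exact ⟨le_rfl, hn⟩
    · exact hle x hx
  replace hσ'' : ¬ ∀ a, ∃ x, a ≤ x ∧ x ≤ a + r ∧ x ∉ insert 1 σ := fun h => hσ'' ⟨hrange, h⟩
  push Not at hσ''
  obtain ⟨a, ha⟩ := hσ''
  have ha1 := (hrange a (ha a le_rfl (by lia))).1
  obtain ⟨y, hay, hya, hyσ⟩ := hruns a
  obtain rfl : y = 1 := (Finset.mem_insert.1 (ha y hay hya)).resolve_right hyσ
  obtain rfl : a = 1 := by lia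
  have hblock : ∀ x, 2 ≤ x → x ≤ r + 1 → x ∈ σ := fun x hx hx' =>
    (Finset.mem_insert.1 (ha x (by lia) (by lia))).resolve_left (by lia)
  have hgap : r + 2 ∉ σ := by
    obtain ⟨x, hx, hx', hxσ⟩ := hruns 2
    have : ¬ x ≤ r + 1 := fun h => hxσ (hblock x hx h)
    rwa [show r + 2 = x by lia]
  refine ⟨(Finset.Icc 1 n).filter (· + (r + 2) ∈ σ), ?_, ?_⟩
  · rw [mem_IndFaces_iff]
    simp only [Finset.mem_filter, Finset.mem_Icc]
    refine ⟨fun x hx => ?_, fun b => ?_⟩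
    · have := hle _ hx.2
      lia
    · obtain ⟨x, hx, hx', hxσ⟩ := hruns (b + (r + 2))
      refine ⟨x - (r + 2), by lia, by lia, fun h => hxσ ?_⟩
      simpa [show r + 2 ≤ x by lia] using h.2
  · ext x
    simp only [mem_blockFace, Finset.mem_filter, Finset.mem_Icc]
    constructor
    · rintro (h | ⟨y, hy, rfl⟩)
      · exact hblock x h.1 h.2
      · exact hy.2
    · intro hx
      have hxn := hle x hx
      have h1 : x ≠ 1 := by rintro rfl; exact hyσ hx
      have h2 : x ≠ r + 2 := by rintro rfl; exact hgap hx
      by_cases hxr : x ≤ r + 1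
      · exact Or.inl (by lia)
      · refine Or.inr ⟨x - (r + 2), ⟨by lia, ?_⟩, by lia⟩
        rwa [Nat.sub_add_cancel (by lia)]

theorem exists_sD_eq_of_mem_IndStar (S : Type) [CommRing S] (A : Type) [CommRing A] [Algebra S A]
    (r n : ℕ) {j : ℤ} {z : (Finset ℕ) →₀ A} (hz : z ∈ sDeg S A (IndStar r n) j)
    (hz0 : sD S A z = 0) : ∃ e ∈ sDeg S A (IndStar r n) (j + 1), sD S A e = z := by
  refine exists_sD_eq_of_cone S A (m := 1) (fun σ hσ x hx => ?_) (fun σ hσ => ?_) hz hz0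
  · exact ((mem_IndFaces_iff.1 hσ).1 x (Finset.mem_insert_of_mem hx)).1
  · simpa [IndStar] using hσ

variable (S : Type) [CommRing S] (A : Type) [CommRing A] [Algebra S A]

/-- The linear extension of `blockFace` to chains. -/
noncomputable def blockLift (r : ℕ) : ((Finset ℕ) →₀ A) →ₗ[S] ((Finset ℕ) →₀ A) :=
  Finsupp.lmapDomain A S (blockFace r)

/-- The left inverse of `blockLift` that kills all faces not of the form `blockFace r τ`. -/
noncomputable def blockProj (r : ℕ) : ((Finset ℕ) →₀ A) →ₗ[S] ((Finset ℕ) →₀ A) :=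
  Finsupp.lcomapDomain (blockFace r) (blockFace_injective r)

theorem blockLift_single (r : ℕ) (τ : Finset ℕ) (a : A) :
    blockLift S A r (Finsupp.single τ a) = Finsupp.single (blockFace r τ) a :=
  Finsupp.mapDomain_single

theorem blockProj_apply (r : ℕ) (z : (Finset ℕ) →₀ A) (τ : Finset ℕ) :
    blockProj S A r z τ = z (blockFace r τ) := rfl

theorem blockProj_blockLift (r : ℕ) (y : (Finset ℕ) →₀ A) :
    blockProj S A r (blockLift S A r y) = y := by
  ext τ
  rw [blockProj_apply]
  exact Finsupp.mapDomain_apply (blockFace_injective r) y τ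

theorem blockLift_mem {r n : ℕ} (hn : r + 1 ≤ n) {j : ℤ} {y : (Finset ℕ) →₀ A}
    (hy : y ∈ sDeg S A (IndFaces r (n - (r + 2))) j) :
    blockLift S A r y ∈ sDeg S A (IndFaces r n) (j + r) := by
  refine map_mem_of_mem_sDeg _ _ (fun τ hτ hc a => ?_) hy
  rw [blockLift_single]
  refine single_mem_sDeg S A (blockFace_mem_IndFaces hn hτ) ?_ a
  rw [card_blockFace]
  push_cast
  lia

theorem mem_IndFaces_of_blockFace_mem {r n : ℕ} {τ : Finset ℕ}
    (h : blockFace r τ ∈ IndFaces r n) (hn : 1 ≤ n) : τ ∈ IndFaces r (n - (r + 2)) := by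
  obtain ⟨τ', hτ', heq⟩ := exists_blockFace_eq hn h (blockFace_notMem_IndStar r n τ)
  rwa [← blockFace_injective r heq]

theorem blockProj_mem {r n : ℕ} (hn : 1 ≤ n) {j : ℤ} {z : (Finset ℕ) →₀ A}
    (hz : z ∈ sDeg S A (IndFaces r n) (j + r)) :
    blockProj S A r z ∈ sDeg S A (IndFaces r (n - (r + 2))) j := by
  refine (Finsupp.mem_supported S _).2 fun τ hτ => ?_
  have h := (Finsupp.mem_supported S z).1 hz
    (Finsupp.mem_support_iff.2 (blockProj_apply S A r z τ ▸ Finsupp.mem_support_iff.1 hτ))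
  refine ⟨mem_IndFaces_of_blockFace_mem h.1 hn, ?_⟩
  have := h.2
  rw [card_blockFace] at this
  push_cast at this
  lia

theorem blockProj_eq_zero_of_mem_IndStar {r n : ℕ} {j : ℤ} {z : (Finset ℕ) →₀ A}
    (hz : z ∈ sDeg S A (IndStar r n) j) : blockProj S A r z = 0 := by
  ext τ
  rw [blockProj_apply, Finsupp.zero_apply]
  by_contra h
  exact blockFace_notMem_IndStar r n τ
    ((Finsupp.mem_supported S z).1 hz (Finsupp.mem_support_iff.2 h)).1

theorem mem_IndStar_of_blockProj_eq_zero {r n : ℕ} (hn : 1 ≤ n) {j : ℤ} {z : (Finset ℕ) →₀ A}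
    (hz : z ∈ sDeg S A (IndFaces r n) j) (hz0 : blockProj S A r z = 0) :
    z ∈ sDeg S A (IndStar r n) j := by
  refine (Finsupp.mem_supported S z).2 fun σ hσ => ?_
  have h := (Finsupp.mem_supported S z).1 hz hσ
  refine ⟨?_, h.2⟩
  by_contra h'
  obtain ⟨τ, -, rfl⟩ := exists_blockFace_eq hn h.1 h'
  exact Finsupp.mem_support_iff.1 hσ (by rw [← blockProj_apply S, hz0, Finsupp.zero_apply])

theorem blockFace_erase (r : ℕ) {τ : Finset ℕ} {v : ℕ} :
    (blockFace r τ).erase (v + (r + 2)) = blockFace r (τ.erase v) := by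
  ext x
  simp only [Finset.mem_erase, mem_blockFace]
  constructor
  · rintro ⟨hx, h | ⟨y, hy, rfl⟩⟩
    · exact Or.inl h
    · exact Or.inr ⟨y, ⟨by rintro rfl; exact hx rfl, hy⟩, rfl⟩
  · rintro (h | ⟨y, hy, rfl⟩)
    · exact ⟨by lia, Or.inl h⟩
    · exact ⟨by lia, Or.inr ⟨y, hy.2, rfl⟩⟩

theorem card_filter_blockFace (r : ℕ) {τ : Finset ℕ} {v : ℕ} :
    ((blockFace r τ).filter (· < v + (r + 2))).card = r + (τ.filter (· < v)).card := by
  rw [← card_blockFace]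
  congr 1
  ext x
  simp only [Finset.mem_filter, mem_blockFace]
  constructor
  · rintro ⟨h | ⟨y, hy, rfl⟩, hx⟩
    · exact Or.inl h
    · exact Or.inr ⟨y, ⟨hy, by lia⟩, rfl⟩
  · rintro (h | ⟨y, hy, rfl⟩)
    · exact ⟨Or.inl h, by lia⟩
    · exact ⟨Or.inr ⟨y, hy.1, rfl⟩, by lia⟩

/-- Up to a sign, `blockLift` commutes with the boundary modulo the closed star of `1`. -/
theorem sD_blockLift_sub_mem {r n : ℕ} (hn : r + 1 ≤ n) {j : ℤ} {y : (Finset ℕ) →₀ A}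
    (hy : y ∈ sDeg S A (IndFaces r (n - (r + 2))) (j + 1)) :
    sD S A (blockLift S A r y) - (-1 : ℤ) ^ r • blockLift S A r (sD S A y) ∈
      sDeg S A (IndStar r n) (j + r) := by
  refine map_mem_of_mem_sDeg
    (sD S A ∘ₗ blockLift S A r - (-1 : ℤ) ^ r • (blockLift S A r ∘ₗ sD S A)) _
    (fun τ hτ hc a => ?_) hy
  have hsum : (-1 : ℤ) ^ r • blockLift S A r (sD S A (Finsupp.single τ a)) =
      ∑ v ∈ τ.map (addRightEmbedding (r + 2)),
        ((-1 : ℤ) ^ ((blockFace r τ).filter (· < v)).card) •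
          Finsupp.single ((blockFace r τ).erase v) a := by
    rw [sD_single, map_sum, Finset.smul_sum, Finset.sum_map]
    refine Finset.sum_congr rfl fun v _ => ?_
    rw [addRightEmbedding_apply, blockFace_erase, card_filter_blockFace, map_zsmul,
      blockLift_single, smul_smul, pow_add]
  rw [LinearMap.sub_apply, LinearMap.smul_apply, LinearMap.comp_apply, LinearMap.comp_apply, hsum,
    blockLift_single, sD_single]
  nth_rewrite 1 [blockFace]
  rw [Finset.sum_union (disjoint_block r), add_sub_cancel_right]
  refine Submodule.sum_mem _ fun v hv => zsmul_mem (single_mem_sDeg S A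
    (blockFace_erase_mem_IndStar hn hτ hv) ?_ a) _
  have := Finset.card_erase_add_one (Finset.mem_union_left _ hv : v ∈ blockFace r τ)
  rw [← blockFace, card_blockFace] at this
  lia

theorem blockProj_sD {r n : ℕ} (hn : r + 1 ≤ n) {j : ℤ} {z : (Finset ℕ) →₀ A}
    (hz : z ∈ sDeg S A (IndFaces r n) (j + r + 1)) :
    blockProj S A r (sD S A z) = (-1 : ℤ) ^ r • sD S A (blockProj S A r z) := by
  rw [add_right_comm] at hz
  have hy := blockProj_mem S A (by lia) hz
  have h1 := blockProj_eq_zero_of_mem_IndStar S A (sD_blockLift_sub_mem S A hn hy)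
  have hz' := mem_IndStar_of_blockProj_eq_zero S A (r := r) (by lia)
    (sub_mem hz (blockLift_mem S A hn hy)) (by rw [map_sub, blockProj_blockLift, sub_self])
  rw [add_right_comm] at hz'
  have h2 := blockProj_eq_zero_of_mem_IndStar S A
    (sD_mem_sDeg S A (isLowerSet_IndStar r n) hz')
  rw [map_sub, map_sub, sub_eq_zero] at h2
  rw [map_sub, map_zsmul, blockProj_blockLift, sub_eq_zero] at h1
  rw [h2, h1]

/-- Passing from `n` to `n - (r + 2)` vertices shifts the homology of the `r`-independence
complex of the path by `r` degrees. -/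
theorem SH_IndFaces_equiv {r n : ℕ} (hn : r + 1 ≤ n) (j : ℤ) :
    Nonempty (SH S A (IndFaces r n) (j + r) ≃ₗ[S] SH S A (IndFaces r (n - (r + 2))) j) := by
  have hn1 : 1 ≤ n := by lia
  have hsign (x : (Finset ℕ) →₀ A) : (-1 : ℤ) ^ r • (-1 : ℤ) ^ r • x = x := by
    rw [smul_smul, ← mul_pow]
    simp
  have hproj {z : (Finset ℕ) →₀ A} (i : ℤ) (hz : z ∈ sDeg S A (IndFaces r n) (i + r)) :
      sD S A (blockProj S A r z) = (-1 : ℤ) ^ r • blockProj S A r (sD S A z) := by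
    rw [blockProj_sD S A hn (j := i - 1) (by rwa [show i - 1 + r + 1 = i + r by ring]), hsign]
  refine homologyOf_equiv_homologyOf _ _ _ _ _ _ (blockProj S A r) ?_ ?_ ?_
  · intro z hz hz0
    exact ⟨by rw [hproj j hz, hz0, map_zero, smul_zero], blockProj_mem S A hn1 hz⟩
  · intro y hy hy0
    have hlift := blockLift_mem S A hn hy
    have hD : sD S A (blockLift S A r y) ∈ sDeg S A (IndStar r n) (j - 1 + r) := by
      have := sD_blockLift_sub_mem S A hn (j := j - 1) (by rwa [sub_add_cancel])
      rwa [hy0, map_zero, smul_zero, sub_zero] at this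
    obtain ⟨e, he, heq⟩ := exists_sD_eq_of_mem_IndStar S A r n hD (sD_sD S A _)
    rw [show j - 1 + r + 1 = j + r by ring] at he
    refine ⟨blockLift S A r y - e, sub_mem hlift ?_, ?_, ?_⟩
    · exact sDeg_mono S A (IndStar_subset r n) he
    · rw [map_sub, heq, sub_self]
    · rw [map_sub, blockProj_blockLift, blockProj_eq_zero_of_mem_IndStar S A he, sub_zero]
  · intro z hz hz0
    constructor
    · rintro ⟨y, hy, hyz⟩
      have hlift := blockLift_mem S A hn hy
      rw [add_right_comm] at hlift
      have hw : z - (-1 : ℤ) ^ r • sD S A (blockLift S A r y) ∈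
          sDeg S A (IndStar r n) (j + r) := by
        refine mem_IndStar_of_blockProj_eq_zero S A hn1 (sub_mem hz (zsmul_mem
          (sD_mem_sDeg S A (isLowerSet_IndFaces r n) hlift) _)) ?_
        rw [map_sub, map_zsmul, blockProj_sD S A hn hlift, blockProj_blockLift, hsign, hyz,
          sub_self]
      obtain ⟨e, he, heq⟩ := exists_sD_eq_of_mem_IndStar S A r n hw
        (by rw [map_sub, map_zsmul, sD_sD, smul_zero, sub_zero, hz0])
      refine ⟨e + (-1 : ℤ) ^ r • blockLift S A r y, add_mem ?_ (zsmul_mem hlift _), ?_⟩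
      · exact sDeg_mono S A (IndStar_subset r n) he
      · rw [map_add, heq, map_zsmul, sub_add_cancel]
    · rintro ⟨e, he, rfl⟩
      have he' := he
      rw [add_right_comm] at he'
      refine ⟨(-1 : ℤ) ^ r • blockProj S A r e,
        zsmul_mem (blockProj_mem S A hn1 he') _, ?_⟩
      rw [blockProj_sD S A hn he, map_zsmul]

theorem subsingleton_SH_IndFaces_of_le {r n : ℕ} (hn : 1 ≤ n) (hr : n ≤ r) (j : ℤ) :
    Subsingleton (SH S A (IndFaces r n) j) := by
  have hstar : IndStar r n = IndFaces r n := by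
    refine (IndStar_subset r n).antisymm fun σ hσ => ?_
    by_contra h
    obtain ⟨τ, -, rfl⟩ := exists_blockFace_eq hn hσ h
    have := (mem_IndFaces_iff.1 hσ).1 (r + 1) (mem_blockFace.2 (Or.inl ⟨by lia, le_rfl⟩))
    lia
  refine subsingleton_homologyOf _ _ _ fun z hz hz0 => ?_
  rw [← hstar] at hz ⊢
  exact exists_sD_eq_of_mem_IndStar S A r n hz hz0

theorem IndFaces_zero (r : ℕ) : IndFaces r 0 = {∅} := by
  ext σ
  rw [mem_IndFaces_iff, Set.mem_singleton_iff]
  constructor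
  · rintro ⟨h, -⟩
    refine Finset.eq_empty_of_forall_notMem fun x hx => ?_
    have := h x hx
    lia
  · rintro rfl
    exact ⟨by simp, fun a => ⟨a, le_rfl, by lia, by simp⟩⟩

theorem SH_singleton_empty_equiv : Nonempty (SH S A {∅} (-1) ≃ₗ[S] A) := by
  have hcycle : ∀ a : A, Finsupp.single ∅ a ∈ kerOf (sD S A) ⊓ sDeg S A {∅} (-1) :=
    fun a => ⟨by simp [kerOf, sD_single],
      single_mem_sDeg S A (Set.mem_singleton _) (by simp) a⟩
  refine homologyOf_equiv_of_surjective _ _ _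
    ((Finsupp.lapply ∅ : ((Finset ℕ) →₀ A) →ₗ[S] A) ∘ₗ Submodule.subtype _)
    (fun a => ⟨⟨_, hcycle a⟩, by simp⟩) ?_
  rintro ⟨z, hz⟩
  change z ∅ = 0 ↔ ∃ e ∈ sDeg S A {∅} (-1 + 1), sD S A e = z
  constructor
  · intro h
    refine ⟨0, zero_mem _, ?_⟩
    rw [map_zero]
    ext σ
    by_contra hne
    have hσ := (Finsupp.mem_supported S z).1 hz.2 (Finsupp.mem_support_iff.2 (Ne.symm hne))
    rw [Set.mem_singleton_iff.1 hσ.1] at hne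
    exact hne h.symm
  · rintro ⟨e, he, rfl⟩
    have := map_mem_of_mem_sDeg (sD S A) ⊥ (fun σ hσ _ a => by
      simp [Set.mem_singleton_iff.1 hσ, sD_single]) he
    rw [(Submodule.mem_bot S).1 this, Finsupp.zero_apply]

theorem subsingleton_SH_singleton_empty {j : ℤ} (hj : j ≠ -1) :
    Subsingleton (SH S A {∅} j) := by
  refine subsingleton_homologyOf _ _ _ fun z hz _ => ⟨0, zero_mem _, ?_⟩
  have := map_mem_of_mem_sDeg LinearMap.id ⊥ (fun σ hσ hc a => by
    rw [Set.mem_singleton_iff.1 hσ, Finset.card_empty] at hc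
    push_cast at hc
    lia) hz
  rw [map_zero]
  exact ((Submodule.mem_bot S).1 this).symm

theorem SH_IndFaces (r n : ℕ) (j : ℤ) :
    ((∃ k : ℕ, (n = (r + 2) * k ∨ n + 1 = (r + 2) * k) ∧ j + 1 = (k * r : ℕ)) →
      Nonempty (SH S A (IndFaces r n) j ≃ₗ[S] A)) ∧
    ((¬ ∃ k : ℕ, (n = (r + 2) * k ∨ n + 1 = (r + 2) * k) ∧ j + 1 = (k * r : ℕ)) →
      Subsingleton (SH S A (IndFaces r n) j)) := by
  induction n using Nat.strong_induction_on generalizing j with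
  | _ n ih =>
  rcases Nat.eq_zero_or_pos n with rfl | hpos
  · rw [IndFaces_zero]
    constructor
    · rintro ⟨k, hk, hj⟩
      obtain rfl : k = 0 := by
        rcases hk with hk | hk
        · simpa using hk.symm
        · have := Nat.eq_one_of_mul_eq_one_right hk.symm
          lia
      obtain rfl : j = -1 := by
        push_cast at hj
        lia
      exact SH_singleton_empty_equiv S A
    · intro h
      refine subsingleton_SH_singleton_empty S A fun hj => h ⟨0, Or.inl rfl, ?_⟩
      simp [hj]
  rcases Nat.lt_or_ge r n with hr | hr
  · obtain ⟨e⟩ := SH_IndFaces_equiv S A (show r + 1 ≤ n from hr) (j - r)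
    rw [sub_add_cancel] at e
    have hiff : (∃ k : ℕ, (n = (r + 2) * k ∨ n + 1 = (r + 2) * k) ∧ j + 1 = (k * r : ℕ)) ↔
        ∃ k : ℕ, (n - (r + 2) = (r + 2) * k ∨ n - (r + 2) + 1 = (r + 2) * k) ∧
          j - r + 1 = (k * r : ℕ) := by
      constructor
      · rintro ⟨_ | k, hk, hj⟩
        · lia
        · refine ⟨k, ?_, ?_⟩
          · rw [mul_add_one] at hk
            rcases Nat.eq_zero_or_pos k with rfl | hk0
            · lia
            · have := Nat.le_mul_of_pos_right (r + 2) hk0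
              lia
          · push_cast at hj ⊢
            linarith
      · rintro ⟨k, hk, hj⟩
        refine ⟨k + 1, ?_, ?_⟩
        · rw [mul_add_one]
          rcases Nat.eq_zero_or_pos k with rfl | hk0
          · lia
          · have := Nat.le_mul_of_pos_right (r + 2) hk0
            lia
        · push_cast at hj ⊢
          linarith
    rw [hiff]
    obtain ⟨h1, h2⟩ := ih (n - (r + 2)) (by lia) (j - r)
    refine ⟨fun h => ⟨e.trans (h1 h).some⟩, fun h => ?_⟩
    have := h2 h
    exact e.toEquiv.subsingleton
  · refine ⟨?_, fun _ => subsingleton_SH_IndFaces_of_le S A hpos hr j⟩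
    rintro ⟨k, hk, -⟩
    rcases Nat.eq_zero_or_pos k with rfl | hk0
    · lia
    · have := Nat.le_mul_of_pos_right (r + 2) hk0
      lia

end PathComplex

/--
The reduced rational homology of the `(d-2)`-independence complex of the path
on `n` vertices: `H̃_j(Ind_{d-2}(A_n); ℚ) ≅ ℚ` if `n = dk` or `n = dk - 1` for
some `k ≥ 1` and `j = k(d-2) - 1`, and `H̃_j(Ind_{d-2}(A_n); ℚ) = 0` in all
other cases.
-/
theorem homology_independence_complex_path (n d : ℕ) (hn : 1 ≤ n) (hd : 2 ≤ d)
    (j : ℤ) :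
    ((∃ k : ℕ, 1 ≤ k ∧ (n = d * k ∨ n + 1 = d * k) ∧
        j + 1 = ((k * (d - 2) : ℕ) : ℤ)) →
      Nonempty (SH ℚ ℚ (IndFaces (d - 2) n) j ≃ₗ[ℚ] ℚ)) ∧
    ((¬ ∃ k : ℕ, 1 ≤ k ∧ (n = d * k ∨ n + 1 = d * k) ∧
        j + 1 = ((k * (d - 2) : ℕ) : ℤ)) →
      Subsingleton (SH ℚ ℚ (IndFaces (d - 2) n) j)) := by
  obtain ⟨r, rfl⟩ := Nat.exists_eq_add_of_le' hd
  rw [Nat.add_sub_cancel]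
  have hiff : (∃ k : ℕ, 1 ≤ k ∧ (n = (r + 2) * k ∨ n + 1 = (r + 2) * k) ∧
      j + 1 = ((k * r : ℕ) : ℤ)) ↔
      ∃ k : ℕ, (n = (r + 2) * k ∨ n + 1 = (r + 2) * k) ∧ j + 1 = ((k * r : ℕ) : ℤ) := by
    refine exists_congr fun k => and_iff_right_of_imp fun ⟨hk, _⟩ => ?_
    rcases Nat.eq_zero_or_pos k with rfl | hk0
    · lia
    · exact hk0
  rw [hiff]
  exact SH_IndFaces ℚ ℚ r n j
end

section
/- Let d ≥ 2, 0 ≤ f ≤ d − 1, and n ≥ f be integers, and let K_{n,f} = {σ ⊆ {1, …, n} : {1, …, f} ⊆ σ}. There exists an acyclic matching M on K_{n,f} (ordered by inclusion), weighted with respect to v_d, such that every pair (τ, σ) ∈ M satisfies σ = τ ∪ {v} for a vertex v with v ≡ f + 1 or v ≡ 0 (mod d), and whose critical elements are exactly the following: (i) if n = f, the unique critical element is {1, …, f}; (ii) if f ≤ d − 2, n > f and n = kd + f with k ≥ 1, there are exactly two critical elements, τ₀ = {i ∈ {1,…,n} : i mod d ∉ {0, f+1}} and σ₀ = τ₀ ∪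 {kd}, with v_d(τ₀) = 0 and v_d(σ₀) = 1; (iii) if f ≤ d − 2, n > f and n = kd − 1 with k ≥ 1, there are exactly two critical elements, τ₀ = {i ∈ {1,…,n} : i mod d ∉ {0, f+1}} and σ₀ = τ₀ ∪ {(k−1)d + f + 1}, with v_d(τ₀) = 0 and v_d(σ₀) = 1; (iv) in all other cases (in particular whenever n > f = d − 1, or n ≢ f and n ≢ −1 mod d) the matching is perfect. Moreover, in cases (ii) and (iii) the only alternating path between the two critical elements is the trivial one σ₀ ⊃ τ₀. -/
/-- The number of consecutive elements of `σ` ending at `x`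
(the position of `x` within its maximal run, `0` if `x ∉ σ`). -/
def leftRun (σ : Finset ℕ) (x : ℕ) : ℕ :=
  (σ.filter fun y => y ≤ x ∧ Finset.Icc y x ⊆ σ).card

/-- The `φ_d`-weight of type `A`: the sum over the maximal runs of consecutive
integers of `σ`, of sizes `n_1, …, n_m`, of `⌊(n_i + 1)/d⌋`. -/
def vA (d : ℕ) (σ : Finset ℕ) : ℕ :=
  (σ.filter fun x => d ∣ (leftRun σ x + 1)).card

/-- A matching on a family `P` of finite sets: a set of pairs `(τ, σ)` with
`τ ⊆ σ`, `|σ| = |τ| + 1`, every element of `P` occurring in at most one pair. -/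
def IsMatching (P : Set (Finset ℕ)) (M : Set (Finset ℕ × Finset ℕ)) : Prop :=
  (∀ p ∈ M, p.1 ∈ P ∧ p.2 ∈ P ∧ p.1 ⊆ p.2 ∧ p.2.card = p.1.card + 1) ∧
  (∀ p ∈ M, ∀ q ∈ M, p ≠ q → p.1 ≠ q.1 ∧ p.1 ≠ q.2 ∧ p.2 ≠ q.1 ∧ p.2 ≠ q.2)

/-- An element of `P` is critical for `M` if it occurs in no pair of `M`. -/
def IsCritical (P : Set (Finset ℕ)) (M : Set (Finset ℕ × Finset ℕ))
    (σ : Finset ℕ) : Prop :=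
  σ ∈ P ∧ ∀ p ∈ M, p.1 ≠ σ ∧ p.2 ≠ σ

/-- Acyclicity of a matching: there is no closed alternating path
`σ_0 ⊳ τ_1 ⊲ σ_1 ⊳ τ_2 ⊲ ⋯ ⊳ τ_m ⊲ σ_m = σ_0` with `m ≥ 2`. -/
def IsAcyclic (M : Set (Finset ℕ × Finset ℕ)) : Prop :=
  ¬ ∃ (m : ℕ) (σs τs : ℕ → Finset ℕ), 2 ≤ m ∧ σs m = σs 0 ∧
      ∀ i, 1 ≤ i → i ≤ m →
        (τs i, σs i) ∈ M ∧ τs i ⊆ σs (i - 1) ∧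
        (σs (i - 1)).card = (τs i).card + 1 ∧ (τs i, σs (i - 1)) ∉ M

/-- A matching is weighted w.r.t. a weight function `v` if matched pairs have
equal weight. -/
def IsWeighted (v : Finset ℕ → ℕ) (M : Set (Finset ℕ × Finset ℕ)) : Prop :=
  ∀ p ∈ M, v p.1 = v p.2

/-- The only alternating path from the critical cell `σ` down to the critical
cell `τ` is the trivial one (`m = 0`, i.e. the single covering `σ ⊃ τ`). -/
def OnlyTrivialAltPath (M : Set (Finset ℕ × Finset ℕ)) (σ τ : Finset ℕ) : Prop :=
  ∀ (m : ℕ) (σs τs : ℕ → Finset ℕ),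
    σs 0 = σ →
    (∀ i, 1 ≤ i → i ≤ m →
      (τs i, σs i) ∈ M ∧ τs i ⊆ σs (i - 1) ∧
      (σs (i - 1)).card = (τs i).card + 1 ∧ (τs i, σs (i - 1)) ∉ M) →
    τ ⊆ σs m → (σs m).card = τ.card + 1 → m = 0

/-- The poset `K_{n,f}` of subsets of `{1, …, n}` containing `{1, …, f}`. -/
def Knf (n f : ℕ) : Set (Finset ℕ) :=
  {σ | σ ⊆ Finset.Icc 1 n ∧ Finset.Icc 1 f ⊆ σ}

/-- The bottom critical cell of `K_{n,f}`:
`τ₀ = {i ∈ {1, …, n} : i mod d ∉ {0, f+1}}`. -/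
def tau0 (d f n : ℕ) : Finset ℕ :=
  (Finset.Icc 1 n).filter fun i => i % d ≠ 0 ∧ i % d ≠ f + 1

/-! ### Left runs and the weight `vA` -/

theorem leftRun_of_notMem {σ : Finset ℕ} {x : ℕ} (hx : x ∉ σ) : leftRun σ x = 0 := by
  rw [leftRun, Finset.card_eq_zero, Finset.filter_eq_empty_iff]
  rintro y - ⟨hy, h⟩
  exact hx (h (Finset.mem_Icc.2 ⟨hy, le_rfl⟩))

theorem leftRun_succ {σ : Finset ℕ} {x : ℕ} (hx : x + 1 ∈ σ) :
    leftRun σ (x + 1) = leftRun σ x + 1 := by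
  have key : (σ.filter fun y => y ≤ x + 1 ∧ Finset.Icc y (x + 1) ⊆ σ) =
      insert (x + 1) (σ.filter fun y => y ≤ x ∧ Finset.Icc y x ⊆ σ) := by
    ext y
    simp only [Finset.mem_filter, Finset.mem_insert, Finset.subset_iff, Finset.mem_Icc]
    constructor
    · rintro ⟨h1, h2, h3⟩
      by_cases hy : y = x + 1
      · exact Or.inl hy
      · exact Or.inr ⟨h1, by omega, fun z hz => h3 ⟨hz.1, by omega⟩⟩
    · rintro (rfl | ⟨h1, h2, h3⟩)
      · refine ⟨hx, le_rfl, fun z hz => ?_⟩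
        rwa [show z = x + 1 by omega]
      · refine ⟨h1, by omega, fun z hz => ?_⟩
        by_cases hz' : z = x + 1
        · rwa [hz']
        · exact h3 ⟨hz.1, by omega⟩
  rw [leftRun, key, Finset.card_insert_of_notMem (by simp), leftRun]

theorem leftRun_le {σ : Finset ℕ} {u : ℕ} (hu : u ∉ σ) (k : ℕ) : leftRun σ (u + k) ≤ k := by
  induction k with
  | zero => simp [leftRun_of_notMem hu]
  | succ k ih =>
    by_cases h : u + k + 1 ∈ σ
    · rw [← add_assoc, leftRun_succ h]
      omega
    · rw [← add_assoc, leftRun_of_notMem h]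
      omega

theorem leftRun_eq {σ : Finset ℕ} {u : ℕ} (hu : u ∉ σ) (k : ℕ)
    (h : ∀ y, u < y → y ≤ u + k → y ∈ σ) : leftRun σ (u + k) = k := by
  induction k with
  | zero => simp [leftRun_of_notMem hu]
  | succ k ih =>
    rw [← add_assoc, leftRun_succ (h _ (by omega) (by omega)),
      ih fun y h1 h2 => h y h1 (by omega)]

/-- If `σ` and `ρ` agree beyond `u` and their left runs at `u` are congruent modulo `d`,
then this persists beyond `u`. -/
theorem leftRun_modEq {d : ℕ} {σ ρ : Finset ℕ} {u : ℕ} (h0 : leftRun σ u ≡ leftRun ρ u [MOD d])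
    (h : ∀ y, u < y → (y ∈ σ ↔ y ∈ ρ)) (k : ℕ) :
    leftRun σ (u + k) ≡ leftRun ρ (u + k) [MOD d] := by
  induction k with
  | zero => exact h0
  | succ k ih =>
    have hk := h (u + k + 1) (by omega)
    by_cases hm : u + k + 1 ∈ σ
    · rw [← add_assoc, leftRun_succ hm, leftRun_succ (hk.1 hm)]
      exact ih.add_right 1
    · rw [← add_assoc, leftRun_of_notMem hm, leftRun_of_notMem (fun h' => hm (hk.2 h'))]

theorem leftRun_congr {σ ρ : Finset ℕ} {x : ℕ} (h : ∀ y ≤ x, (y ∈ σ ↔ y ∈ ρ)) :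
    leftRun σ x = leftRun ρ x := by
  unfold leftRun
  congr 1
  ext y
  simp only [Finset.mem_filter, Finset.subset_iff, Finset.mem_Icc]
  constructor
  · rintro ⟨h1, h2, h3⟩
    exact ⟨(h y h2).1 h1, h2, fun z hz => (h z hz.2).1 (h3 hz)⟩
  · rintro ⟨h1, h2, h3⟩
    exact ⟨(h y h2).2 h1, h2, fun z hz => (h z hz.2).2 (h3 hz)⟩

theorem not_dvd_of_leftRun_le {d : ℕ} (hd : 2 ≤ d) {r : ℕ} (hr : r ≤ d - 2) : ¬ d ∣ r + 1 :=
  Nat.not_dvd_of_pos_of_lt (by omega) (by omega)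

/-- Adding the vertex following a run of size `d - 1` does not change the weight. -/
theorem vA_insert_of_run {d : ℕ} (hd : 2 ≤ d) {τ : Finset ℕ} {u : ℕ} (hu : u ∉ τ)
    (h : ∀ y, u < y → y < u + d → y ∈ τ) (hv : u + d ∉ τ) :
    vA d (insert (u + d) τ) = vA d τ := by
  unfold vA
  congr 1
  have hrun : leftRun (insert (u + d) τ) (u + d) = d := by
    apply leftRun_eq
    · simp only [Finset.mem_insert, not_or]
      exact ⟨by omega, hu⟩
    · intro y h1 h2
      rcases h2.eq_or_lt with rfl | h2
      · simp
      · exact Finset.mem_insert_of_mem (h y h1 h2)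
  have hcong : ∀ x ≠ u + d,
      (d ∣ leftRun (insert (u + d) τ) x + 1 ↔ d ∣ leftRun τ x + 1) := by
    intro x hx
    rcases lt_or_gt_of_ne hx with hx | hx
    · rw [leftRun_congr (ρ := τ)]
      intro y hy
      simp only [Finset.mem_insert, or_iff_right_iff_imp]
      omega
    · obtain ⟨k, rfl⟩ := Nat.exists_eq_add_of_lt hx
      have := leftRun_modEq (d := d) (σ := insert (u + d) τ) (ρ := τ) (u := u + d)
        (by rw [hrun, leftRun_of_notMem hv]; simp [Nat.ModEq])
        (by intro y hy; simp only [Finset.mem_insert, or_iff_right_iff_imp]; omega) (k + 1)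
      exact (this.add_right 1).dvd_iff dvd_rfl
  ext x
  simp only [Finset.mem_filter, Finset.mem_insert]
  by_cases hx : x = u + d
  · subst hx
    simp only [true_or, true_and, hv, false_and, iff_false, hrun]
    rw [Nat.dvd_add_right dvd_rfl, Nat.dvd_one]
    omega
  · rw [hcong x hx]
    simp [hx]

/-- Adding a vertex strictly between two missing vertices at distance at most `d - 1`
does not change the weight. -/
theorem vA_insert_of_gap {d : ℕ} (hd : 2 ≤ d) {τ : Finset ℕ} {u v y : ℕ} (hu : u ∉ τ)
    (huv : u < v) (hvy : v < y) (hy : y ∉ τ) (hyu : y < u + d) (hv : v ∉ τ) :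
    vA d (insert v τ) = vA d τ := by
  unfold vA
  congr 1
  have hu' : u ∉ insert v τ := by
    simp only [Finset.mem_insert, not_or]
    exact ⟨by omega, hu⟩
  have hy' : y ∉ insert v τ := by
    simp only [Finset.mem_insert, not_or]
    exact ⟨by omega, hy⟩
  have hcong : ∀ x, (d ∣ leftRun (insert v τ) x + 1 ↔ d ∣ leftRun τ x + 1) := by
    intro x
    rcases lt_or_ge x v with hx | hx
    · rw [leftRun_congr (ρ := τ)]
      intro z hz
      simp only [Finset.mem_insert, or_iff_right_iff_imp]
      omega
    rcases lt_or_ge x y with hxy | hxy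
    · obtain ⟨k, rfl⟩ := Nat.exists_eq_add_of_le (show u ≤ x by omega)
      have h1 := leftRun_le hu k
      have h2 := leftRun_le hu' k
      exact iff_of_false (not_dvd_of_leftRun_le hd (by omega))
        (not_dvd_of_leftRun_le hd (by omega))
    · obtain ⟨k, rfl⟩ := Nat.exists_eq_add_of_le hxy
      have := leftRun_modEq (d := d) (σ := insert v τ) (ρ := τ) (u := y)
        (by rw [leftRun_of_notMem hy, leftRun_of_notMem hy'])
        (by intro z hz; simp only [Finset.mem_insert, or_iff_right_iff_imp]; omega) k
      exact (this.add_right 1).dvd_iff dvd_rfl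
  ext x
  simp only [Finset.mem_filter, Finset.mem_insert, hcong]
  constructor
  · rintro ⟨rfl | h1, h2⟩
    · rw [leftRun_of_notMem hv] at h2
      exact absurd h2 (not_dvd_of_leftRun_le hd (by omega))
    · exact ⟨h1, h2⟩
  · exact fun h => ⟨Or.inr h.1, h.2⟩

/-! ### Matchings given by ranked toggles -/

/-- The pairs of elements of `P` obtained from a relation `T`, where `T σ v c` means that
`σ` is to be matched by adding or removing `v`, and has rank `c`. -/
def toggleMatching (P : Set (Finset ℕ)) (T : Finset ℕ → ℕ → ℤ → Prop) :
    Set (Finset ℕ × Finset ℕ) :=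
  {p | p.1 ∈ P ∧ p.2 ∈ P ∧ ∃ v c, v ∉ p.1 ∧ p.2 = insert v p.1 ∧ T p.1 v c}

/-- The rank is monotone, two comparable sets of the same rank toggle the same vertex,
and toggling preserves the toggled vertex and the rank. -/
structure IsToggle (T : Finset ℕ → ℕ → ℤ → Prop) : Prop where
  mono : ∀ {τ σ v w a b}, τ ⊆ σ → T τ v a → T σ w b → a ≤ b ∧ (a = b → v = w)
  insert_iff : ∀ {τ v c}, v ∉ τ → (T (insert v τ) v c ↔ T τ v c)

namespace IsToggle

variable {P : Set (Finset ℕ)} {T : Finset ℕ → ℕ → ℤ → Prop}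

theorem unique (hT : IsToggle T) {σ v w a b} (h : T σ v a) (h' : T σ w b) : v = w :=
  (hT.mono subset_rfl h h').2
    (le_antisymm (hT.mono subset_rfl h h').1 (hT.mono subset_rfl h' h).1)

theorem isMatching (hT : IsToggle T) : IsMatching P (toggleMatching P T) := by
  constructor
  · rintro ⟨τ, σ⟩ ⟨h1, h2, v, c, hv, hσ, -⟩
    simp only at h1 h2 hv hσ ⊢
    subst hσ
    exact ⟨h1, h2, Finset.subset_insert _ _, Finset.card_insert_of_notMem hv⟩
  · rintro ⟨τ, σ⟩ ⟨-, -, v, c, hv, hσ, h⟩ ⟨τ', σ'⟩ ⟨-, -, w, b, hw, hσ', h'⟩ hne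
    simp only at hv hσ h hw hσ' h' ⊢
    subst hσ hσ'
    have h2 := (hT.insert_iff hv).2 h
    have h2' := (hT.insert_iff hw).2 h'
    refine ⟨?_, ?_, ?_, ?_⟩
    · rintro rfl
      obtain rfl := hT.unique h h'
      exact hne rfl
    · rintro rfl
      obtain rfl := hT.unique h h2'
      exact hv (Finset.mem_insert_self _ _)
    · rintro rfl
      obtain rfl := hT.unique h2 h'
      exact hw (Finset.mem_insert_self _ _)
    · intro heq
      rw [heq] at h2
      obtain rfl := hT.unique h2 h2'
      have : τ = τ' := by
        rw [← Finset.erase_insert hv, ← Finset.erase_insert hw, heq]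
      exact hne (by rw [this])

/-- The rank strictly decreases along an alternating step. -/
theorem rank_lt (hT : IsToggle T) {σ τ' : Finset ℕ} {v w : ℕ} {a b : ℤ} (hσ : σ ∈ P)
    (hτ' : τ' ∈ P) (hv : v ∈ σ) (h : T σ v a) (hsub : τ' ⊆ σ)
    (hcard : σ.card = τ'.card + 1) (hw : w ∉ τ') (h' : T τ' w b)
    (hM : (τ', σ) ∉ toggleMatching P T) : b < a := by
  obtain ⟨hle, heq⟩ := hT.mono hsub h' h
  refine lt_of_le_of_ne hle fun hab => hM ?_
  obtain rfl := heq hab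
  refine ⟨hτ', hσ, w, b, hw, ?_, h'⟩
  refine (Finset.eq_of_subset_of_card_le (Finset.insert_subset hv hsub) ?_).symm
  simp only [Finset.card_insert_of_notMem hw]
  omega

/-- Along an alternating path, the ranks of the matched pairs are at most the first rank. -/
theorem exists_rank (hT : IsToggle T) {m : ℕ} {σs τs : ℕ → Finset ℕ}
    (h : ∀ i, 1 ≤ i → i ≤ m → (τs i, σs i) ∈ toggleMatching P T ∧ τs i ⊆ σs (i - 1) ∧
      (σs (i - 1)).card = (τs i).card + 1 ∧ (τs i, σs (i - 1)) ∉ toggleMatching P T)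
    (hm : 1 ≤ m) :
    ∃ v a w b, T (τs 1) v a ∧ v ∈ σs 1 ∧ v ∉ τs 1 ∧ T (σs m) w b ∧ w ∈ σs m ∧ b ≤ a := by
  induction m, hm using Nat.le_induction with
  | base =>
    obtain ⟨⟨-, -, v, c, hv, hσ, hc⟩, -⟩ := h 1 le_rfl le_rfl
    simp only at hv hσ hc
    refine ⟨v, c, v, c, hc, ?_, hv, ?_, ?_, le_rfl⟩ <;> rw [hσ]
    · simp
    · exact (hT.insert_iff hv).2 hc
    · simp
  | succ m hm ih =>
    obtain ⟨v, a, w, b, h1, h2, h3, h4, h5, h6⟩ :=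
      ih fun i hi hi' => h i hi (by omega)
    obtain ⟨⟨-, hP, -⟩, -⟩ := h m hm (by omega)
    obtain ⟨⟨hP', -, x, c, hx, hσ, hc⟩, hsub, hcard, hM⟩ := h (m + 1) (by omega) le_rfl
    simp only [Nat.add_sub_cancel] at hx hσ hc hsub hcard hM hP hP'
    refine ⟨v, a, x, c, h1, h2, h3, ?_, ?_, ?_⟩
    · rw [hσ]
      exact (hT.insert_iff hx).2 hc
    · rw [hσ]
      simp
    · exact (hT.rank_lt hP hP' h5 h4 hsub hcard hx hc hM).le.trans h6

theorem isAcyclic (hT : IsToggle T) : IsAcyclic (toggleMatching P T) := by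
  rintro ⟨m, σs, τs, hm, hcyc, h⟩
  obtain ⟨v, a, w, b, h1, -, h3, h4, h5, h6⟩ := hT.exists_rank h (by omega)
  obtain ⟨⟨-, hP, -⟩, -⟩ := h m (by omega) le_rfl
  obtain ⟨⟨hP', -⟩, hsub, hcard, hM⟩ := h 1 le_rfl (by omega)
  simp only [Nat.sub_self, ← hcyc] at hsub hcard hM hP hP'
  have := hT.rank_lt hP hP' h5 h4 hsub hcard h3 h1 hM
  omega

theorem isCritical_Knf_iff (hT : IsToggle T) {n f : ℕ} (hf : ∀ {σ v c}, T σ v c → f < v)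
    {σ : Finset ℕ} :
    IsCritical (Knf n f) (toggleMatching (Knf n f) T) σ ↔
      σ ∈ Knf n f ∧ ∀ v c, T σ v c → n < v := by
  refine and_congr_right fun hσ => ⟨fun h v c hvc => ?_, ?_⟩
  · by_contra! hvn
    have hfv := hf hvc
    by_cases hv : v ∈ σ
    · refine (h (σ.erase v, σ) ⟨⟨?_, ?_⟩, hσ, v, c, ?_, ?_, ?_⟩).2 rfl
      · exact (Finset.erase_subset _ _).trans hσ.1
      · refine Finset.subset_erase.2 ⟨hσ.2, ?_⟩
        simp only [Finset.mem_Icc, not_and]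
        omega
      · simp
      · simp [Finset.insert_erase hv]
      · rw [← hT.insert_iff (Finset.notMem_erase _ _), Finset.insert_erase hv]
        exact hvc
    · refine (h (σ, insert v σ) ⟨hσ, ⟨?_, ?_⟩, v, c, hv, rfl, hvc⟩).1 rfl
      · refine Finset.insert_subset ?_ hσ.1
        simp only [Finset.mem_Icc]
        omega
      · exact hσ.2.trans (Finset.subset_insert _ _)
  · rintro h ⟨τ, ρ⟩ ⟨-, hρ, v, c, hv, hins, hc⟩
    simp only at hρ hv hins hc ⊢
    have hvn : v ≤ n := by
      have := hρ.1 (hins ▸ Finset.mem_insert_self v τ)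
      exact (Finset.mem_Icc.1 this).2
    constructor
    · rintro rfl
      exact absurd (h v c hc) (by omega)
    · rintro rfl
      rw [hins] at h
      exact absurd (h v c ((hT.insert_iff hv).2 hc)) (by omega)

end IsToggle

/-! ### The distinguished vertices -/

/-- The increasing enumeration `0, f + 1, d, d + f + 1, 2 * d, …` of the integers congruent
to `0` or `f + 1` modulo `d`. -/
def wall (d f j : ℕ) : ℕ := j / 2 * d + j % 2 * (f + 1)

section Wall

variable {d f : ℕ}

@[simp] theorem wall_zero : wall d f 0 = 0 := by simp [wall]

@[simp] theorem wall_one : wall d f 1 = f + 1 := by simp [wall]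

theorem wall_two_mul (k : ℕ) : wall d f (2 * k) = k * d := by simp [wall]

theorem wall_two_mul_add_one (k : ℕ) : wall d f (2 * k + 1) = k * d + f + 1 := by
  have h1 : (2 * k + 1) / 2 = k := by omega
  have h2 : (2 * k + 1) % 2 = 1 := by omega
  rw [wall, h1, h2]
  ring

theorem wall_add_two (j : ℕ) : wall d f (j + 2) = wall d f j + d := by
  rw [wall, wall, Nat.add_div_right _ two_pos, Nat.add_mod_right]
  ring

theorem wall_lt_succ (hf : f + 1 < d) (j : ℕ) : wall d f j < wall d f (j + 1) := by
  induction j using Nat.twoStepInduction with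
  | zero => simp
  | one =>
    rw [wall_add_two 0]
    simpa using hf
  | more j ih _ =>
    rw [show j + 2 + 1 = j + 1 + 2 from rfl, wall_add_two, wall_add_two]
    omega

theorem wall_strictMono (hf : f + 1 < d) : StrictMono (wall d f) :=
  strictMono_nat_of_lt_succ (wall_lt_succ hf)

theorem wall_succ_lt (hf : f + 1 < d) (j : ℕ) : wall d f (j + 1) < wall d f j + d := by
  rw [← wall_add_two]
  exact wall_lt_succ hf _

theorem exists_wall_le_lt (hf : f + 1 < d) (x : ℕ) :
    ∃ j, wall d f j ≤ x ∧ x < wall d f (j + 1) := by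
  induction x with
  | zero => exact ⟨0, by simp, by simp⟩
  | succ x ih =>
    obtain ⟨j, h1, h2⟩ := ih
    rcases Nat.lt_or_ge (x + 1) (wall d f (j + 1)) with h | h
    · exact ⟨j, by omega, h⟩
    · have := wall_lt_succ hf (j + 1)
      exact ⟨j + 1, h, by omega⟩

theorem wall_ne_of_lt_of_lt (hf : f + 1 < d) {j y : ℕ} (h1 : wall d f j < y)
    (h2 : y < wall d f (j + 1)) (i : ℕ) : wall d f i ≠ y := by
  rintro rfl
  have := (wall_strictMono hf).lt_iff_lt.1 h1
  have := (wall_strictMono hf).lt_iff_lt.1 h2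
  omega

theorem wall_mod (hf : f + 1 < d) (j : ℕ) :
    wall d f j % d = 0 ∨ wall d f j % d = f + 1 := by
  rcases Nat.even_or_odd' j with ⟨k, rfl | rfl⟩
  · left
    simp [wall_two_mul]
  · right
    rw [wall_two_mul_add_one, add_assoc, Nat.mul_add_mod', Nat.mod_eq_of_lt hf]

theorem mem_tau0 (hf : f + 1 < d) {n y : ℕ} :
    y ∈ tau0 d f n ↔ y ≤ n ∧ ∀ i, wall d f i ≠ y := by
  simp only [tau0, Finset.mem_filter, Finset.mem_Icc]
  constructor
  · rintro ⟨h1, h2⟩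
    refine ⟨h1.2, ?_⟩
    rintro i rfl
    have := wall_mod hf i
    omega
  · rintro ⟨h1, h2⟩
    have h0 := h2 0
    rw [wall_zero] at h0
    have hy := Nat.div_add_mod' y d
    refine ⟨⟨by omega, h1⟩, fun h => h2 (2 * (y / d)) ?_, fun h => h2 (2 * (y / d) + 1) ?_⟩
    · rw [wall_two_mul]
      omega
    · rw [wall_two_mul_add_one]
      omega

end Wall

/-! ### The toggle relation -/

/-- Below the `j`-th wall, the missing vertices of `σ` are exactly the walls. -/
def IsStandard (d f j : ℕ) (σ : Finset ℕ) : Prop :=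
  ∀ y < wall d f j, (y ∈ σ ↔ ∀ i, wall d f i ≠ y)

/-- `σ` is standard below the `j`-th wall and misses a vertex between it and the next one. -/
def IsDeficient (d f j : ℕ) (σ : Finset ℕ) : Prop :=
  IsStandard d f j σ ∧ ∃ y, wall d f j < y ∧ y < wall d f (j + 1) ∧ y ∉ σ

/-- `σ` is standard below the `j`-th wall and contains this wall and all vertices between it
and the next one. -/
def IsSaturated (d f j : ℕ) (σ : Finset ℕ) : Prop :=
  IsStandard d f j σ ∧ wall d f j ∈ σ ∧ ∀ y, wall d f j < y → y < wall d f (j + 1) → y ∈ σ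

/-- The toggle relation defining the matching on `Knf n f` when `f + 1 < d`. -/
def wallToggle (d f n : ℕ) (σ : Finset ℕ) (v : ℕ) (c : ℤ) : Prop :=
  ∃ j, 1 ≤ j ∧ j ≤ n ∧
    (IsDeficient d f j σ ∧ v = wall d f j ∧ c = j - (n + 1) ∨
      IsSaturated d f j σ ∧ v = wall d f (j + 1) ∧ c = n + 1 - j)

section Toggle

variable {d f n : ℕ}

theorem IsStandard.wall_notMem (hf : f + 1 < d) {i j : ℕ} {σ : Finset ℕ}
    (h : IsStandard d f j σ) (hij : i < j) : wall d f i ∉ σ := fun hm =>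
  (h _ (wall_strictMono hf hij)).1 hm i rfl

theorem IsStandard.mem (hf : f + 1 < d) {i j y : ℕ} {σ : Finset ℕ}
    (h : IsStandard d f j σ) (hij : i < j) (h1 : wall d f i < y) (h2 : y < wall d f (i + 1)) :
    y ∈ σ :=
  (h y (h2.trans_le ((wall_strictMono hf).monotone hij))).2 (wall_ne_of_lt_of_lt hf h1 h2)

theorem isStandard_insert_iff {j v : ℕ} {σ : Finset ℕ} (hv : wall d f j ≤ v) :
    IsStandard d f j (insert v σ) ↔ IsStandard d f j σ := by
  refine forall₂_congr fun y hy => ?_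
  rw [Finset.mem_insert, or_iff_right (by omega)]

theorem isDeficient_insert_iff {j : ℕ} {σ : Finset ℕ} :
    IsDeficient d f j (insert (wall d f j) σ) ↔ IsDeficient d f j σ := by
  refine and_congr (isStandard_insert_iff le_rfl) (exists_congr fun y => ?_)
  refine and_congr_right fun hy => and_congr_right fun _ => ?_
  rw [Finset.mem_insert, or_iff_right (by omega)]

theorem isSaturated_insert_iff (hf : f + 1 < d) {j : ℕ} {σ : Finset ℕ} :
    IsSaturated d f j (insert (wall d f (j + 1)) σ) ↔ IsSaturated d f j σ := by
  have := wall_lt_succ hf j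
  refine and_congr (isStandard_insert_iff this.le) (and_congr ?_ ?_)
  · rw [Finset.mem_insert, or_iff_right (by omega)]
  · refine forall_congr' fun y => forall₂_congr fun _ hy => ?_
    rw [Finset.mem_insert, or_iff_right (by omega)]

theorem IsDeficient.le_of_subset (hf : f + 1 < d) {i j : ℕ} {τ σ : Finset ℕ} (h : τ ⊆ σ)
    (hτ : IsStandard d f i τ) (hσ : IsDeficient d f j σ) : i ≤ j := by
  by_contra! hij
  obtain ⟨-, y, h1, h2, h3⟩ := hσ
  exact h3 (h (hτ.mem hf hij h1 h2))

theorem IsSaturated.le_of_subset (hf : f + 1 < d) {i j : ℕ} {τ σ : Finset ℕ} (h : τ ⊆ σ)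
    (hτ : IsSaturated d f i τ) (hσ : IsStandard d f j σ) : j ≤ i := by
  by_contra! hij
  exact hσ.wall_notMem hf hij (h hτ.2.1)

theorem IsSaturated.not_isDeficient (hf : f + 1 < d) {i j : ℕ} {τ σ : Finset ℕ} (h : τ ⊆ σ)
    (hτ : IsSaturated d f i τ) (hσ : IsDeficient d f j σ) : False := by
  obtain rfl := le_antisymm (hσ.le_of_subset hf h hτ.1) (hτ.le_of_subset hf h hσ.1)
  obtain ⟨-, y, h1, h2, h3⟩ := hσ
  exact h3 (h (hτ.2.2 y h1 h2))

theorem isToggle_wallToggle (hf : f + 1 < d) : IsToggle (wallToggle d f n) where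
  mono := by
    rintro τ σ v w a b hsub ⟨i, hi, hi', ⟨hτ, rfl, rfl⟩ | ⟨hτ, rfl, rfl⟩⟩
      ⟨j, hj, hj', ⟨hσ, rfl, rfl⟩ | ⟨hσ, rfl, rfl⟩⟩
    · have := hσ.le_of_subset hf hsub hτ.1
      refine ⟨by omega, fun h => ?_⟩
      rw [show i = j by omega]
    · exact ⟨by omega, fun h => by omega⟩
    · exact (hτ.not_isDeficient hf hsub hσ).elim
    · have := hτ.le_of_subset hf hsub hσ.1
      refine ⟨by omega, fun h => ?_⟩
      rw [show i = j by omega]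
  insert_iff := by
    intro τ v c _
    refine exists_congr fun j => and_congr_right fun _ => and_congr_right fun _ => or_congr ?_ ?_
    · refine and_congr_left fun h => ?_
      rw [h.1, isDeficient_insert_iff]
    · refine and_congr_left fun h => ?_
      rw [h.1, isSaturated_insert_iff hf]

theorem exists_wall_of_wallToggle (hf : f + 1 < d) {σ : Finset ℕ} {v : ℕ} {c : ℤ}
    (h : wallToggle d f n σ v c) : f < v ∧ ∃ j, v = wall d f j := by
  have key : ∀ j, 1 ≤ j → f < wall d f j := fun j hj => by
    have := (wall_strictMono hf).monotone hj
    rw [wall_one] at this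
    omega
  obtain ⟨j, hj, -, ⟨-, rfl, -⟩ | ⟨-, rfl, -⟩⟩ := h
  · exact ⟨key j hj, j, rfl⟩
  · exact ⟨key _ (by omega), _, rfl⟩

theorem vA_insert_of_wallToggle (hf : f + 1 < d) {τ : Finset ℕ} {v : ℕ} {c : ℤ}
    (h : wallToggle d f n τ v c) (hv : v ∉ τ) : vA d (insert v τ) = vA d τ := by
  obtain ⟨j, hj, -, h⟩ := h
  obtain ⟨i, rfl⟩ := Nat.exists_eq_add_of_le' hj
  have h2 := wall_add_two (d := d) (f := f) i
  rcases h with ⟨⟨hs, y, hy1, hy2, hy3⟩, rfl, -⟩ | ⟨⟨hs, hm, hy⟩, rfl, -⟩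
  · rw [show i + 1 + 1 = i + 2 from rfl] at hy2
    exact vA_insert_of_gap (by omega) (hs.wall_notMem hf (Nat.lt_succ_self i))
      (wall_lt_succ hf i) hy1 hy3 (by omega) hv
  · rw [show i + 1 + 1 = i + 2 from rfl] at hy hv ⊢
    rw [h2] at hy hv ⊢
    refine vA_insert_of_run (by omega) (hs.wall_notMem hf (Nat.lt_succ_self i)) ?_ hv
    intro y h1 h3
    rcases lt_trichotomy y (wall d f (i + 1)) with h | rfl | h
    · exact hs.mem hf (Nat.lt_succ_self i) h1 h
    · exact hm
    · exact hy y h h3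

/-! ### Critical elements -/

theorem isStandard_one_of_mem_Knf {σ : Finset ℕ} (hσ : σ ∈ Knf n f) (hf : f + 1 < d) :
    IsStandard d f 1 σ := by
  intro y hy
  rw [wall_one] at hy
  constructor
  · intro hm
    have h1 := Finset.mem_Icc.1 (hσ.1 hm)
    exact wall_ne_of_lt_of_lt hf (j := 0) (by rw [wall_zero]; omega) (by simpa using hy)
  · intro h
    have := h 0
    rw [wall_zero] at this
    exact hσ.2 (Finset.mem_Icc.2 ⟨by omega, by omega⟩)

/-- The first failure of standardness is a deficiency or a saturation. -/
theorem IsStandard.succ_or (hf : f + 1 < d) {j : ℕ} {σ : Finset ℕ} (h : IsStandard d f j σ) :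
    IsStandard d f (j + 1) σ ∨ IsDeficient d f j σ ∨ IsSaturated d f j σ := by
  by_cases hD : ∃ y, wall d f j < y ∧ y < wall d f (j + 1) ∧ y ∉ σ
  · exact Or.inr (Or.inl ⟨h, hD⟩)
  push Not at hD
  by_cases hw : wall d f j ∈ σ
  · exact Or.inr (Or.inr ⟨h, hw, hD⟩)
  left
  intro y hy
  rcases lt_trichotomy y (wall d f j) with h1 | rfl | h1
  · exact h y h1
  · exact iff_of_false hw fun h' => h' j rfl
  · exact iff_of_true (hD y h1 hy) (wall_ne_of_lt_of_lt hf h1 hy)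

/-- A set that does not toggle any vertex up to `n` is standard up to the last wall `≤ n`, and
is standard or saturated at it. -/
theorem isStandard_or_isSaturated (hf : f + 1 < d) {N : ℕ} (hN : 1 ≤ N) (hNn : wall d f N ≤ n)
    {σ : Finset ℕ} (hσ : σ ∈ Knf n f) (h : ∀ v c, wallToggle d f n σ v c → n < v) :
    IsStandard d f (N + 1) σ ∨ IsSaturated d f N σ := by
  have hle : ∀ j, wall d f j ≤ n → j ≤ n := fun j hj =>
    ((wall_strictMono hf).le_apply).trans hj
  have hnd : ∀ j, 1 ≤ j → wall d f j ≤ n → ¬ IsDeficient d f j σ := fun j hj hjn hD =>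
    absurd (h _ _ ⟨j, hj, hle j hjn, Or.inl ⟨hD, rfl, rfl⟩⟩) (by omega)
  have hstd : ∀ j, 1 ≤ j → wall d f j ≤ n → IsStandard d f j σ := by
    intro j hj
    induction j, hj using Nat.le_induction with
    | base => exact fun _ => isStandard_one_of_mem_Knf hσ hf
    | succ j hj ih =>
      intro hjn
      have hj' : wall d f j ≤ n := (wall_lt_succ hf j).le.trans hjn
      rcases (ih hj').succ_or hf with h1 | h1 | h1
      · exact h1
      · exact absurd h1 (hnd j hj hj')
      · exact absurd (h _ _ ⟨j, hj, hle j hj', Or.inr ⟨h1, rfl, rfl⟩⟩) (by omega)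
  rcases (hstd N hN hNn).succ_or hf with h1 | h1 | h1
  · exact Or.inl h1
  · exact absurd h1 (hnd N hN hNn)
  · exact Or.inr h1

/-- If a critical element exists, then `n + 1` is a wall. -/
theorem eq_wall_of_critical (hf : f + 1 < d) {N : ℕ} (hNn : wall d f N ≤ n)
    (hnN : n < wall d f (N + 1)) {σ : Finset ℕ} (hσ : σ ∈ Knf n f)
    (h : IsStandard d f (N + 1) σ ∨ IsSaturated d f N σ) : n + 1 = wall d f (N + 1) := by
  by_contra hne
  have hm : n + 1 ∈ σ := by
    rcases h with h | h
    · exact h.mem hf (Nat.lt_succ_self N) (by omega) (by omega)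
    · exact h.2.2 _ (by omega) (by omega)
  have := (Finset.mem_Icc.1 (hσ.1 hm)).2
  omega

theorem isStandard_tau0 (hf : f + 1 < d) {j : ℕ} (hj : wall d f j ≤ n + 1) :
    IsStandard d f j (tau0 d f n) := fun y hy => by
  rw [mem_tau0 hf, and_iff_right (by omega)]

theorem isStandard_insert_tau0 (hf : f + 1 < d) {N : ℕ} (hn : n + 1 = wall d f (N + 1)) :
    IsStandard d f N (insert (wall d f N) (tau0 d f n)) := by
  have := wall_lt_succ hf N
  exact (isStandard_insert_iff le_rfl).2 (isStandard_tau0 hf (by omega))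

theorem tau0_mem_Knf (hf : f + 1 < d) (hn : f ≤ n) : tau0 d f n ∈ Knf n f := by
  refine ⟨Finset.filter_subset _ _, fun y hy => ?_⟩
  rw [Finset.mem_Icc] at hy
  refine (mem_tau0 hf).2 ⟨by omega, wall_ne_of_lt_of_lt hf (j := 0) ?_ ?_⟩
  · rw [wall_zero]
    omega
  · simpa [Nat.lt_succ_iff] using hy.2

theorem insert_tau0_mem_Knf (hf : f + 1 < d) (hn : f ≤ n) {N : ℕ} (hN : 1 ≤ N)
    (hNn : wall d f N ≤ n) : insert (wall d f N) (tau0 d f n) ∈ Knf n f := by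
  have h := tau0_mem_Knf hf hn
  refine ⟨Finset.insert_subset (Finset.mem_Icc.2 ⟨?_, hNn⟩) h.1,
    h.2.trans (Finset.subset_insert _ _)⟩
  exact hN.trans (wall_strictMono hf).le_apply

theorem wallToggle_rank_pos (hf : f + 1 < d) {N : ℕ}
    (hn : n + 1 = wall d f (N + 1)) {σ : Finset ℕ} (hσ : tau0 d f n ⊆ σ) {v : ℕ} {c : ℤ}
    (h : wallToggle d f n σ v c) (hv : v ≤ n) : 0 < c := by
  obtain ⟨j, hj, hj', ⟨hD, rfl, -⟩ | ⟨-, -, rfl⟩⟩ := h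
  · have h1 := hD.le_of_subset hf hσ (isStandard_tau0 hf hn.ge)
    have := (wall_strictMono hf).monotone h1
    omega
  · omega

theorem wallToggle_rank_neg (hf : f + 1 < d) {N : ℕ}
    (hn : n + 1 = wall d f (N + 1)) {σ : Finset ℕ}
    (hσ : σ ⊆ insert (wall d f N) (tau0 d f n)) {v : ℕ} {c : ℤ}
    (h : wallToggle d f n σ v c) (hv : v ≤ n) : c < 0 := by
  obtain ⟨j, hj, hj', ⟨-, -, rfl⟩ | ⟨hS, rfl, -⟩⟩ := h
  · omega
  · have h1 := hS.le_of_subset hf hσ (isStandard_insert_tau0 hf hn)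
    have := (wall_strictMono hf).monotone (Nat.succ_le_succ h1)
    simp only [Nat.succ_eq_add_one] at this
    omega

theorem critical_iff (hf : f + 1 < d) (hfn : f ≤ n) {N : ℕ} (hN : 1 ≤ N)
    (hn : n + 1 = wall d f (N + 1)) {σ : Finset ℕ} :
    IsCritical (Knf n f) (toggleMatching (Knf n f) (wallToggle d f n)) σ ↔
      σ = tau0 d f n ∨ σ = insert (wall d f N) (tau0 d f n) := by
  have hNn : wall d f N ≤ n := by
    have := wall_lt_succ hf N
    omega
  rw [(isToggle_wallToggle hf).isCritical_Knf_iff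
    fun h => (exists_wall_of_wallToggle hf h).1]
  constructor
  · rintro ⟨hσ, h⟩
    have hlt : ∀ y, n < y → y ∉ σ := fun y hy hm => by
      have := (Finset.mem_Icc.1 (hσ.1 hm)).2
      omega
    rcases isStandard_or_isSaturated hf hN hNn hσ h with h1 | h1
    · left
      ext y
      rw [mem_tau0 hf]
      rcases Nat.lt_or_ge n y with hy | hy
      · exact iff_of_false (hlt y hy) (by omega)
      · rw [and_iff_right hy, h1 y (by omega)]
    · right
      ext y
      rw [Finset.mem_insert, mem_tau0 hf]
      rcases Nat.lt_or_ge n y with hy | hy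
      · exact iff_of_false (hlt y hy) (by omega)
      · rw [and_iff_right hy]
        rcases lt_trichotomy y (wall d f N) with h2 | rfl | h2
        · rw [h1.1 y h2, or_iff_right (by omega)]
        · exact iff_of_true h1.2.1 (Or.inl rfl)
        · exact iff_of_true (h1.2.2 y h2 (by omega))
            (Or.inr (wall_ne_of_lt_of_lt hf h2 (by omega)))
  · intro h
    refine ⟨?_, fun v c hvc => ?_⟩
    · rcases h with rfl | rfl
      · exact tau0_mem_Knf hf hfn
      · exact insert_tau0_mem_Knf hf hfn hN hNn
    · by_contra! hv
      have h1 : tau0 d f n ⊆ σ := by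
        rcases h with rfl | rfl
        · exact subset_rfl
        · exact Finset.subset_insert _ _
      have h2 : σ ⊆ insert (wall d f N) (tau0 d f n) := by
        rcases h with rfl | rfl
        · exact Finset.subset_insert _ _
        · exact subset_rfl
      have := wallToggle_rank_pos hf hn h1 hvc hv
      have := wallToggle_rank_neg hf hn h2 hvc hv
      omega

theorem onlyTrivialAltPath (hf : f + 1 < d) {N : ℕ} (hn : n + 1 = wall d f (N + 1)) :
    OnlyTrivialAltPath (toggleMatching (Knf n f) (wallToggle d f n))
      (insert (wall d f N) (tau0 d f n)) (tau0 d f n) := by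
  intro m σs τs h0 h hsub _
  by_contra hm
  obtain ⟨v, a, w, b, h1, h2, -, h4, h5, h6⟩ :=
    (isToggle_wallToggle hf).exists_rank h (by omega)
  obtain ⟨⟨-, hP, -⟩, -⟩ := h m (by omega) le_rfl
  obtain ⟨⟨-, hP1, -⟩, hsub1, -⟩ := h 1 le_rfl (by omega)
  rw [Nat.sub_self, h0] at hsub1
  have := wallToggle_rank_pos hf hn hsub h4
    (Finset.mem_Icc.1 (hP.1 h5)).2
  have := wallToggle_rank_neg hf hn hsub1 h1
    (Finset.mem_Icc.1 (hP1.1 h2)).2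
  omega

theorem wall_notMem_tau0 (hf : f + 1 < d) (j : ℕ) : wall d f j ∉ tau0 d f n := fun h =>
  ((mem_tau0 hf).1 h).2 j rfl

theorem leftRun_tau0_le (hf : f + 1 < d) (x : ℕ) : leftRun (tau0 d f n) x ≤ d - 2 := by
  obtain ⟨j, h1, h2⟩ := exists_wall_le_lt hf x
  obtain ⟨k, rfl⟩ := Nat.exists_eq_add_of_le h1
  have := leftRun_le (wall_notMem_tau0 (n := n) hf j) k
  have := wall_succ_lt hf j
  omega

theorem vA_tau0 (hf : f + 1 < d) : vA d (tau0 d f n) = 0 := by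
  rw [vA, Finset.card_eq_zero, Finset.filter_eq_empty_iff]
  exact fun x _ => not_dvd_of_leftRun_le (by omega) (leftRun_tau0_le hf x)

theorem vA_insert_tau0 (hf : f + 1 < d) {N : ℕ} (hN : 1 ≤ N) (hn : n + 1 = wall d f (N + 1)) :
    vA d (insert (wall d f N) (tau0 d f n)) = 1 := by
  obtain ⟨i, rfl⟩ := Nat.exists_eq_add_of_le' hN
  have hlt := wall_lt_succ hf i
  have hlt' := wall_lt_succ hf (i + 1)
  have h2 : wall d f (i + 1 + 1) = wall d f i + d := wall_add_two i
  have hnn : n = wall d f i + (d - 1) := by omega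
  have hu : wall d f i ∉ insert (wall d f (i + 1)) (tau0 d f n) := by
    rw [Finset.mem_insert, not_or]
    exact ⟨by omega, wall_notMem_tau0 hf i⟩
  have hmem : ∀ y, wall d f i < y → y ≤ wall d f i + (d - 1) →
      y ∈ insert (wall d f (i + 1)) (tau0 d f n) := by
    intro y h3 h4
    rw [Finset.mem_insert, mem_tau0 hf]
    rcases lt_trichotomy y (wall d f (i + 1)) with h | h | h
    · exact Or.inr ⟨by omega, wall_ne_of_lt_of_lt hf h3 h⟩
    · exact Or.inl h
    · exact Or.inr ⟨by omega, wall_ne_of_lt_of_lt hf h (by omega)⟩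
  rw [vA, Finset.card_eq_one]
  refine ⟨n, ?_⟩
  ext x
  rw [Finset.mem_filter, Finset.mem_singleton]
  constructor
  · rintro ⟨hx, hdvd⟩
    have hxn : x ≤ n := by
      rcases Finset.mem_insert.1 hx with rfl | hx
      · omega
      · exact ((mem_tau0 hf).1 hx).1
    by_contra hne
    refine not_dvd_of_leftRun_le (by omega) ?_ hdvd
    rcases Nat.lt_or_ge x (wall d f (i + 1)) with h | h
    · rw [leftRun_congr (ρ := tau0 d f n)]
      · exact leftRun_tau0_le hf x
      · intro y hy
        rw [Finset.mem_insert, or_iff_right (by omega)]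
    · obtain ⟨k, rfl⟩ := Nat.exists_eq_add_of_le (show wall d f i ≤ x by omega)
      have := leftRun_le hu k
      omega
  · intro hx
    rw [hx, hnn]
    rw [hnn] at hu hmem
    refine ⟨hmem _ (by omega) le_rfl, ?_⟩
    rw [leftRun_eq hu _ hmem, Nat.sub_add_cancel (by omega)]

end Toggle

theorem Knf_self (f : ℕ) : Knf f f = {Finset.Icc 1 f} := by
  ext σ
  exact ⟨fun h => Finset.Subset.antisymm h.1 h.2, fun h => by
    rw [Set.mem_singleton_iff] at h
    exact ⟨h.le, h.ge⟩⟩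

/--
The precise matching on `K_{n,f}` for the type-`A` weight `v_d` (Theorem
`thm:matching-An` of the paper): an acyclic weighted matching, all of whose
matched pairs add/remove a vertex `v ≡ f+1` or `v ≡ 0 (mod d)`, with
critical cells described explicitly in each case, perfect otherwise, and such
that when there are two critical cells the only alternating path between them
is the trivial one.
-/
theorem exists_precise_matching_Knf (d f n : ℕ) (hd : 2 ≤ d) (hf : f ≤ d - 1)
    (hn : f ≤ n) :
    ∃ M : Set (Finset ℕ × Finset ℕ),
      IsMatching (Knf n f) M ∧
      IsAcyclic M ∧
      IsWeighted (vA d) M ∧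
      (∀ p ∈ M, ∃ v : ℕ, v ∉ p.1 ∧ p.2 = insert v p.1 ∧
        (v % d = (f + 1) % d ∨ v % d = 0)) ∧
      -- (i) `n = f`: the unique critical element is `{1, …, f}`
      (n = f → ∀ σ : Finset ℕ,
        (IsCritical (Knf n f) M σ ↔ σ = Finset.Icc 1 f)) ∧
      -- (ii) `f ≤ d - 2`, `n = kd + f` with `k ≥ 1`
      (∀ k : ℕ, 1 ≤ k → f ≤ d - 2 → n = k * d + f →
        (∀ σ : Finset ℕ,
          (IsCritical (Knf n f) M σ ↔
            (σ = tau0 d f n ∨ σ = insert (k * d) (tau0 d f n)))) ∧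
        vA d (tau0 d f n) = 0 ∧
        vA d (insert (k * d) (tau0 d f n)) = 1 ∧
        OnlyTrivialAltPath M (insert (k * d) (tau0 d f n)) (tau0 d f n)) ∧
      -- (iii) `f ≤ d - 2`, `n = kd - 1` with `k ≥ 1`
      (∀ k : ℕ, 1 ≤ k → f ≤ d - 2 → n + 1 = k * d →
        (∀ σ : Finset ℕ,
          (IsCritical (Knf n f) M σ ↔
            (σ = tau0 d f n ∨ σ = insert ((k - 1) * d + f + 1) (tau0 d f n)))) ∧
        vA d (tau0 d f n) = 0 ∧
        vA d (insert ((k - 1) * d + f + 1) (tau0 d f n)) = 1 ∧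
        OnlyTrivialAltPath M (insert ((k - 1) * d + f + 1) (tau0 d f n))
          (tau0 d f n)) ∧
      -- (iv) otherwise the matching is perfect
      ((n ≠ f ∧ (¬ ∃ k : ℕ, 1 ≤ k ∧ f ≤ d - 2 ∧ n = k * d + f) ∧
          (¬ ∃ k : ℕ, 1 ≤ k ∧ f ≤ d - 2 ∧ n + 1 = k * d)) →
        ∀ σ : Finset ℕ, ¬ IsCritical (Knf n f) M σ) := by
  rcases hf.eq_or_lt with hf | hf
  · have hT : IsToggle fun _ v c => v = d ∧ c = 0 :=
      ⟨fun _ h h' => ⟨by omega, fun _ => by omega⟩, fun _ => Iff.rfl⟩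
    have hcrit {σ : Finset ℕ} := hT.isCritical_Knf_iff (n := n) (f := f) (σ := σ)
      (fun h => by omega)
    refine ⟨toggleMatching (Knf n f) _, hT.isMatching, hT.isAcyclic, ?_, ?_, ?_, ?_, ?_, ?_⟩
    · rintro ⟨τ, σ⟩ ⟨hτ, -, v, c, hv, hσ, rfl, -⟩
      simp only at hσ hτ hv ⊢
      subst hσ
      have h0 : 0 ∉ τ := fun h => by
        have := Finset.mem_Icc.1 (hτ.1 h)
        omega
      have := vA_insert_of_run hd h0 (fun y h1 h2 => hτ.2 (Finset.mem_Icc.2 (by omega)))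
        (by rwa [zero_add])
      rwa [zero_add, eq_comm] at this
    · rintro ⟨τ, σ⟩ ⟨-, -, v, c, hv, hσ, rfl, -⟩
      exact ⟨v, hv, hσ, Or.inr (Nat.mod_self v)⟩
    · rintro rfl σ
      rw [hcrit, Knf_self, Set.mem_singleton_iff]
      exact and_iff_left fun v c h => by omega
    · intro k _ hf'
      omega
    · intro k _ hf'
      omega
    · rintro ⟨hne, -⟩ σ h
      have := (hcrit.1 h).2 d 0 ⟨rfl, rfl⟩
      omega
  · replace hf : f + 1 < d := by omega
    have hT := isToggle_wallToggle (n := n) hf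
    have hcrit {σ : Finset ℕ} := hT.isCritical_Knf_iff (n := n) (f := f) (σ := σ)
      (fun h => (exists_wall_of_wallToggle hf h).1)
    have main : ∀ N, 1 ≤ N → n + 1 = wall d f (N + 1) →
        (∀ σ, IsCritical (Knf n f) (toggleMatching (Knf n f) (wallToggle d f n)) σ ↔
          (σ = tau0 d f n ∨ σ = insert (wall d f N) (tau0 d f n))) ∧
        vA d (tau0 d f n) = 0 ∧ vA d (insert (wall d f N) (tau0 d f n)) = 1 ∧
        OnlyTrivialAltPath (toggleMatching (Knf n f) (wallToggle d f n))
          (insert (wall d f N) (tau0 d f n)) (tau0 d f n) := fun N hN h =>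
      ⟨fun _ => critical_iff hf hn hN h, vA_tau0 hf, vA_insert_tau0 hf hN h,
        onlyTrivialAltPath hf h⟩
    refine ⟨toggleMatching (Knf n f) (wallToggle d f n), hT.isMatching, hT.isAcyclic,
      ?_, ?_, ?_, ?_, ?_, ?_⟩
    · rintro ⟨τ, σ⟩ ⟨-, -, v, c, hv, hσ, h⟩
      simp only at hσ hv h ⊢
      rw [hσ, vA_insert_of_wallToggle hf h hv]
    · rintro ⟨τ, σ⟩ ⟨-, -, v, c, hv, hσ, h⟩
      obtain ⟨-, j, rfl⟩ := exists_wall_of_wallToggle hf h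
      refine ⟨_, hv, hσ, ?_⟩
      rw [Nat.mod_eq_of_lt hf]
      exact (wall_mod hf j).symm
    · rintro rfl σ
      rw [hcrit, Knf_self, Set.mem_singleton_iff]
      exact and_iff_left fun v c h => (exists_wall_of_wallToggle hf h).1
    · intro k hk _ hkn
      have := main (2 * k) (by omega) (by rw [wall_two_mul_add_one]; omega)
      rwa [wall_two_mul] at this
    · intro k hk _ hkn
      obtain ⟨i, rfl⟩ := Nat.exists_eq_add_of_le' hk
      rw [Nat.add_sub_cancel]
      have := main (2 * i + 1) (by omega)
        (by rw [show 2 * i + 1 + 1 = 2 * (i + 1) by ring, wall_two_mul]; exact hkn)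
      rwa [wall_two_mul_add_one] at this
    · rintro ⟨hne, hii, hiii⟩ σ h
      obtain ⟨hσ, h⟩ := hcrit.1 h
      obtain ⟨N, hN1, hN2⟩ := exists_wall_le_lt hf n
      have hN : 1 ≤ N := by
        by_contra! h0
        obtain rfl : N = 0 := by omega
        rw [zero_add, wall_one] at hN2
        omega
      have heq := eq_wall_of_critical hf hN1 hN2 hσ (isStandard_or_isSaturated hf hN hN1 hσ h)
      rcases Nat.even_or_odd' N with ⟨k, rfl | rfl⟩
      · rw [wall_two_mul_add_one] at heq
        exact hii ⟨k, by omega, by omega, by omega⟩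
      · rw [show 2 * k + 1 + 1 = 2 * (k + 1) by ring, wall_two_mul] at heq
        exact hiii ⟨k + 1, by omega, by omega, heq⟩
end

section
/- Let d ≥ 2 and n ≥ 2 be integers, and let K be the family of all proper subsets of {0, 1, …, n} (including the empty set), where the vertices form a path 0 – 1 – ⋯ – n. Define the weight v(σ) as the sum over the connected components (maximal runs) of σ of: ω_d(s) for a component of size s containing the vertex 0 or the vertex n, where ω_d(s) = ⌊s/d⌋ if d is odd and ⌊2s/d⌋ if d is even, and ⌊(s + 1)/d⌋ for all other components. There exists an acyclic matching on K, weighted with respect to v, whose critical elements are exactly the following: if d is odd, the single simplex {0, 1, …, n − 1}; if d is even, writing n = k·(d/2) + r with 0 ≤ r < d/2 (subsets written as binary strings ε_0 ε_1 ⋯ ε_n with i ∈ σ iff ε_i = 1): the simplices σ_{q₁,q₂} = 1^{q₁(d/2)+r} 0 1^{d−1} 0 (1^{(d/2)−1} 0)^{k−q₁−q₂−2} 1^{q₂(d/2)} for q₁, q₂ ≥ 0 with q₁ + q₂ ≤ k − 2, with |σ_{q₁,q₂}| = n − k + q₁ + q₂ + 1 and v = q₁ + q₂ + 1, and σ'_{q₁,q₂}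 = 1^{q₁(d/2)+r} 0 (1^{(d/2)−1} 0)^{k−q₁−q₂} 1^{q₂(d/2)} for q₁, q₂ ≥ 0 with q₁ + q₂ ≤ k, with |σ'_{q₁,q₂}| = n − k + q₁ + q₂ and v = q₁ + q₂. In particular the matching is precise: |σ| − v(σ) = n − k for every critical σ when d is even. -/
/-- The number of consecutive elements of `σ` starting at `x`. -/
def rightRun (σ : Finset ℕ) (x : ℕ) : ℕ :=
  (σ.filter fun y => x ≤ y ∧ Finset.Icc x y ⊆ σ).card

open Classical in
/-- The weight of affine type `C̃_n` on subsets of the path `{0, …, n}`: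
a run of size `s` containing the vertex `0` or the vertex `n` contributes
`ω_d(s) = ⌊s/d⌋` (`d` odd) or `⌊2s/d⌋` (`d` even); every other run of size `s`
contributes `⌊(s+1)/d⌋`. -/
noncomputable def vTC (d n : ℕ) (σ : Finset ℕ) : ℕ :=
  (σ.filter fun x =>
    if Finset.Icc 0 x ⊆ σ then
      (if d % 2 = 0 then (d / 2) ∣ leftRun σ x else d ∣ leftRun σ x)
    else if Finset.Icc x n ⊆ σ then
      (if d % 2 = 0 then (d / 2) ∣ rightRun σ x else d ∣ rightRun σ x)
    else d ∣ (leftRun σ x + 1)).card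

/-- The subset of `{0, 1, 2, …}` described by a binary string. -/
def strSet (l : List Bool) : Finset ℕ :=
  (Finset.range l.length).filter fun i => l.getD i false = true

/-- The block `1^a`. -/
def one (a : ℕ) : List Bool := List.replicate a true

/-- The block `0^a`. -/
def zero (a : ℕ) : List Bool := List.replicate a false

/-- `m`-fold repetition of a string. -/
def rep : ℕ → List Bool → List Bool
  | 0, _ => []
  | m + 1, l => l ++ rep m l

/-- The critical cell
`σ_{q₁,q₂} = 1^{q₁(d/2)+r} 0 1^{d-1} 0 (1^{(d/2)-1} 0)^{k-q₁-q₂-2} 1^{q₂(d/2)}`. -/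
def sigC (d k r q₁ q₂ : ℕ) : Finset ℕ :=
  strSet (one (q₁ * (d / 2) + r) ++ zero 1 ++ one (d - 1) ++ zero 1 ++
    rep (k - q₁ - q₂ - 2) (one (d / 2 - 1) ++ zero 1) ++ one (q₂ * (d / 2)))

/-- The critical cell
`σ'_{q₁,q₂} = 1^{q₁(d/2)+r} 0 (1^{(d/2)-1} 0)^{k-q₁-q₂} 1^{q₂(d/2)}`. -/
def sigC' (d k r q₁ q₂ : ℕ) : Finset ℕ :=
  strSet (one (q₁ * (d / 2) + r) ++ zero 1 ++
    rep (k - q₁ - q₂) (one (d / 2 - 1) ++ zero 1) ++ one (q₂ * (d / 2)))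

/-! ### Matchings given by a pivot -/

/-- The matching pairing `σ` with the set obtained by toggling its pivot. -/
def pivotMatching (n : ℕ) (Piv : Finset ℕ → ℕ → Prop) : Set (Finset ℕ × Finset ℕ) :=
  {p | p.2 ⊆ Finset.range (n + 1) ∧ ∃ m, Piv p.2 m ∧ m ∈ p.2 ∧ p.1 = p.2.erase m}

/-- A pivot rule on the proper subsets of `{0, …, n}`: the pivot is unique, unaffected by toggling
it or by removing a smaller vertex, and some vertex below it is missing. -/
structure IsPivotRule (n : ℕ) (Piv : Finset ℕ → ℕ → Prop) : Prop where
  unique : ∀ {σ m m'}, Piv σ m → Piv σ m' → m = m'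
  insert_self : ∀ {σ m}, Piv σ m → Piv (insert m σ) m
  erase : ∀ {σ m y}, Piv σ m → y ≤ m → Piv (σ.erase y) m
  le : ∀ {σ m}, Piv σ m → m ≤ n
  exists_notMem : ∀ {σ m}, Piv σ m → ∃ z < m, z ∉ σ

theorem IsPivotRule.isMatching {n : ℕ} {Piv : Finset ℕ → ℕ → Prop} (h : IsPivotRule n Piv) :
    IsMatching {σ | σ ⊆ Finset.range (n + 1) ∧ σ ≠ Finset.range (n + 1)}
      (pivotMatching n Piv) := by
  constructor
  · rintro ⟨τ, σ⟩ ⟨hσ, m, hm, hmσ, rfl : τ = σ.erase m⟩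
    have hle := h.le hm
    refine ⟨⟨(Finset.erase_subset _ _).trans hσ, ?_⟩, ⟨hσ, ?_⟩, Finset.erase_subset _ _, ?_⟩
    · intro he
      have : m ∈ σ.erase m := (show σ.erase m = _ from he) ▸ Finset.mem_range.2 (by omega)
      simp at this
    · rintro rfl
      obtain ⟨z, hz, hz'⟩ := h.exists_notMem hm
      simp at hz'; omega
    · exact (Finset.card_erase_add_one hmσ).symm
  · rintro ⟨τ, σ⟩ ⟨hσ, m, hm, hmσ, rfl : τ = σ.erase m⟩ ⟨τ', σ'⟩
      ⟨hσ', m', hm', hmσ', rfl : τ' = σ'.erase m'⟩ hne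
    have e1 := h.erase hm le_rfl
    have e2 := h.erase hm' le_rfl
    refine ⟨?_, ?_, ?_, ?_⟩
    · rintro (he : σ.erase m = σ'.erase m')
      rw [he] at e1
      obtain rfl := h.unique e1 e2
      apply hne
      have : σ = σ' := calc
        σ = insert m (σ.erase m) := (Finset.insert_erase hmσ).symm
        _ = insert m (σ'.erase m) := by rw [he]
        _ = σ' := Finset.insert_erase hmσ'
      rw [this]
    · rintro (he : σ.erase m = σ')
      rw [he] at e1
      obtain rfl := h.unique e1 hm'
      rw [← he] at hmσ'; simp at hmσ'
    · rintro (he : σ = σ'.erase m')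
      rw [← he] at e2
      obtain rfl := h.unique e2 hm
      rw [he] at hmσ; simp at hmσ
    · rintro (rfl : σ = σ')
      obtain rfl := h.unique hm hm'
      exact hne rfl

theorem IsPivotRule.isCritical_iff {n : ℕ} {Piv : Finset ℕ → ℕ → Prop} (h : IsPivotRule n Piv)
    (σ : Finset ℕ) :
    IsCritical {σ | σ ⊆ Finset.range (n + 1) ∧ σ ≠ Finset.range (n + 1)} (pivotMatching n Piv) σ ↔
      (σ ⊆ Finset.range (n + 1) ∧ σ ≠ Finset.range (n + 1)) ∧ ∀ m, ¬ Piv σ m := by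
  refine and_congr_right fun hσ => ⟨fun hc m hm => ?_, fun hn p hp => ?_⟩
  · by_cases hmσ : m ∈ σ
    · exact (hc (σ.erase m, σ) ⟨hσ.1, m, hm, hmσ, rfl⟩).2 rfl
    · refine (hc (σ, insert m σ) ⟨?_, m, h.insert_self hm, by simp, ?_⟩).1 rfl
      · exact Finset.insert_subset (by have := h.le hm; simp; omega) hσ.1
      · exact (Finset.erase_insert hmσ).symm
  · obtain ⟨_, m, hm, _, he⟩ := hp
    constructor
    · rintro rfl
      exact hn m (he ▸ h.erase hm le_rfl)
    · rintro rfl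
      exact hn m hm

theorem IsPivotRule.isAcyclic {n : ℕ} {Piv : Finset ℕ → ℕ → Prop} (h : IsPivotRule n Piv) :
    IsAcyclic (pivotMatching n Piv) := by
  rintro ⟨N, σs, τs, hN, hcyc, hpath⟩
  have hex : ∀ i, ∃ p, 1 ≤ i → i ≤ N → Piv (σs i) p ∧ p ∈ σs i ∧ τs i = (σs i).erase p := by
    intro i
    by_cases hi : 1 ≤ i ∧ i ≤ N
    · obtain ⟨⟨_, p, hp⟩, _⟩ := hpath i hi.1 hi.2
      exact ⟨p, fun _ _ => hp⟩
    · exact ⟨0, fun h1 h2 => absurd ⟨h1, h2⟩ hi⟩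
  choose p hp using hex
  obtain ⟨j, hj, hmax⟩ := Finset.exists_max_image (Finset.Icc 1 N) p ⟨1, by simp; omega⟩
  rw [Finset.mem_Icc] at hj
  obtain ⟨i, hi1, hiN, hij⟩ : ∃ i, 1 ≤ i ∧ i ≤ N ∧ σs (i - 1) = σs j := by
    by_cases hjN : j = N
    · exact ⟨1, le_rfl, by omega, by rw [hjN, hcyc]⟩
    · exact ⟨j + 1, by omega, by omega, by simp⟩
  obtain ⟨hM, hsub, hcard, hnM⟩ := hpath i hi1 hiN
  obtain ⟨hpi, hpmem, hτ⟩ := hp i hi1 hiN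
  obtain ⟨hpj, hpjmem, -⟩ := hp j hj.1 hj.2
  obtain ⟨y, hy, hτy⟩ : ∃ y ∈ σs (i - 1), τs i = (σs (i - 1)).erase y := by
    obtain ⟨y, hy, he⟩ := (Finset.covBy_iff_exists_insert).1
      (Finset.covBy_iff_card_sdiff_eq_one.2 ⟨hsub, by
        rw [Finset.card_sdiff_of_subset hsub]; omega⟩)
    exact ⟨y, by rw [← he]; simp, by rw [← he, Finset.erase_insert hy]⟩
  have hlt : p j < y := by
    by_contra hle
    rw [hij] at hτy hy hnM
    have e1 : Piv (τs i) (p j) := hτy ▸ h.erase hpj (not_lt.1 hle)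
    have e2 : Piv (τs i) (p i) := hτ ▸ h.erase hpi le_rfl
    have e := h.unique e1 e2
    have hnot : p j ∉ τs i := by rw [hτ, e]; simp
    have hyp : y = p j := by
      by_contra hne
      exact hnot (by rw [hτy]; simp [hpjmem, Ne.symm hne])
    obtain ⟨hsubN, -⟩ := (hpath j hj.1 hj.2).1
    exact hnM ⟨hsubN, p j, hpj, hpjmem, by rw [hτy, hyp]⟩
  have hne : ∀ l, 1 ≤ l → l ≤ N → y ≠ p l := fun l h1 h2 he => by
    have := hmax l (Finset.mem_Icc.2 ⟨h1, h2⟩)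
    omega
  have hback : ∀ l, l + 1 ≤ N → y ∈ σs (l + 1) → y ∈ σs l := fun l hl hyl => by
    have := (hpath (l + 1) (by omega) hl).2.1
    apply this
    rw [(hp (l + 1) (by omega) hl).2.2]
    exact Finset.mem_erase.2 ⟨hne _ (by omega) hl, hyl⟩
  have hdown : ∀ b ≤ N, y ∈ σs b → ∀ a ≤ b, y ∈ σs a := by
    intro b
    induction b with
    | zero => intro _ hb a ha; obtain rfl : a = 0 := by omega
              exact hb
    | succ b ih =>
      intro hbN hb a ha
      rcases Nat.lt_or_ge b a with hab | hab
      · obtain rfl : a = b + 1 := by omega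
        exact hb
      · exact ih (by omega) (hback b hbN hb) a hab
  have h0 := hdown (i - 1) (by omega) hy 0 (by omega)
  rw [← hcyc] at h0
  have hyi := hdown N le_rfl h0 i hiN
  have : y ∈ τs i := by rw [hτ]; exact Finset.mem_erase.2 ⟨hne i hi1 hiN, hyi⟩
  rw [hτy] at this
  simp at this

/-! ### The weight, localised to runs -/

/-- The period governing the contribution of the end runs. -/
def endPeriod (d : ℕ) : ℕ := if d % 2 = 0 then d / 2 else d

/-- The condition on `x ∈ σ` counted by `vTC`. -/
def Contributes (d n : ℕ) (σ : Finset ℕ) (x : ℕ) : Prop :=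
  x ∈ σ ∧ if Finset.Icc 0 x ⊆ σ then endPeriod d ∣ leftRun σ x
    else if Finset.Icc x n ⊆ σ then endPeriod d ∣ rightRun σ x
    else d ∣ leftRun σ x + 1

open Classical in
/-- The part of `vTC d n σ` contributed by the vertices in `[a, b)`. -/
noncomputable def partWeight (d n : ℕ) (σ : Finset ℕ) (a b : ℕ) : ℕ :=
  ∑ x ∈ Finset.Ico a b, if Contributes d n σ x then 1 else 0

theorem vTC_eq_partWeight {d n : ℕ} {σ : Finset ℕ} (hσ : σ ⊆ Finset.range (n + 1)) :
    vTC d n σ = partWeight d n σ 0 (n + 1) := by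
  classical
  rw [vTC, partWeight, ← Finset.card_filter]
  congr 1
  ext x
  have := @hσ x
  rw [Finset.mem_range] at this
  rw [Finset.mem_filter, Finset.mem_filter, Finset.mem_Ico, Contributes, endPeriod]
  split_ifs <;> exact ⟨fun h => ⟨⟨Nat.zero_le x, this h.1⟩, h⟩, fun h => h.2⟩

theorem partWeight_add {d n : ℕ} {σ : Finset ℕ} {a b c : ℕ} (hab : a ≤ b) (hbc : b ≤ c) :
    partWeight d n σ a b + partWeight d n σ b c = partWeight d n σ a c :=
  Finset.sum_Ico_consecutive _ hab hbc

theorem partWeight_succ {d n : ℕ} {σ : Finset ℕ} {z : ℕ} (hz : z ∉ σ) :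
    partWeight d n σ z (z + 1) = 0 := by
  simp [partWeight, Contributes, hz]

theorem partWeight_congr_below {d n : ℕ} {σ σ' : Finset ℕ} {z : ℕ} (hzn : z ≤ n) (hz : z ∉ σ)
    (hz' : z ∉ σ') (h : ∀ x < z, x ∈ σ ↔ x ∈ σ') :
    partWeight d n σ 0 z = partWeight d n σ' 0 z := by
  refine Finset.sum_congr rfl fun x hx => ?_
  rw [Finset.mem_Ico] at hx
  have hsub : ∀ y, Finset.Icc y x ⊆ σ ↔ Finset.Icc y x ⊆ σ' := fun y => by
    simp only [Finset.subset_iff, Finset.mem_Icc]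
    exact forall_congr' fun w => ⟨fun k hw => (h w (by omega)).1 (k hw),
      fun k hw => (h w (by omega)).2 (k hw)⟩
  have hl : leftRun σ x = leftRun σ' x := by
    unfold leftRun
    congr 1
    ext y
    simp only [Finset.mem_filter, hsub]
    constructor <;> rintro ⟨h1, h2, h3⟩
    · exact ⟨(h y (by omega)).1 h1, h2, h3⟩
    · exact ⟨(h y (by omega)).2 h1, h2, h3⟩
  have hr : ∀ ρ : Finset ℕ, z ∉ ρ → ¬ Finset.Icc x n ⊆ ρ := fun ρ hρ hs =>
    hρ (hs (Finset.mem_Icc.2 ⟨by omega, hzn⟩))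
  simp only [Contributes, h x hx.2, hsub, hl, hr σ hz, hr σ' hz', if_false]

theorem partWeight_congr_above {d n b : ℕ} {σ σ' : Finset ℕ} {z : ℕ} (hz : z ∉ σ)
    (hz' : z ∉ σ') (h : ∀ x, z < x → (x ∈ σ ↔ x ∈ σ')) :
    partWeight d n σ (z + 1) b = partWeight d n σ' (z + 1) b := by
  refine Finset.sum_congr rfl fun x hx => ?_
  rw [Finset.mem_Ico] at hx
  have hsub : ∀ y w, z < y → (Finset.Icc y w ⊆ σ ↔ Finset.Icc y w ⊆ σ') := fun y w hy => by
    simp only [Finset.subset_iff, Finset.mem_Icc]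
    exact forall_congr' fun u => ⟨fun k hw => (h u (by omega)).1 (k hw),
      fun k hw => (h u (by omega)).2 (k hw)⟩
  have hno : ∀ ρ : Finset ℕ, z ∉ ρ → ∀ y ≤ z, ¬ Finset.Icc y x ⊆ ρ := fun ρ hρ y hy hs =>
    hρ (hs (Finset.mem_Icc.2 ⟨hy, by omega⟩))
  have hl : leftRun σ x = leftRun σ' x := by
    unfold leftRun
    congr 1
    ext y
    simp only [Finset.mem_filter]
    rcases Nat.lt_or_ge z y with hy | hy
    · rw [h y hy, hsub y x hy]
    · simp [hno σ hz y hy, hno σ' hz' y hy]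
  have hr : rightRun σ x = rightRun σ' x := by
    unfold rightRun
    congr 1
    ext y
    simp only [Finset.mem_filter]
    constructor <;> rintro ⟨h1, h2, h3⟩
    · exact ⟨(h y (by omega)).1 h1, h2, (hsub _ _ (by omega)).1 h3⟩
    · exact ⟨(h y (by omega)).2 h1, h2, (hsub _ _ (by omega)).2 h3⟩
  simp only [Contributes, h x (by omega), hsub x n (by omega), hl, hr, hno σ hz 0 (Nat.zero_le _),
    hno σ' hz' 0 (Nat.zero_le _), if_false]

theorem leftRun_eq_s12 {σ : Finset ℕ} {a x : ℕ} (hax : a ≤ x) (hsub : ∀ y, a ≤ y → y ≤ x → y ∈ σ)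
    (ha : a = 0 ∨ a - 1 ∉ σ) : leftRun σ x = x + 1 - a := by
  rw [leftRun, ← Nat.card_Icc]
  congr 1
  ext y
  simp only [Finset.mem_filter, Finset.mem_Icc]
  constructor
  · rintro ⟨h1, h2, h3⟩
    refine ⟨?_, h2⟩
    by_contra hlt
    rcases ha with rfl | ha
    · omega
    · exact ha (h3 (Finset.mem_Icc.2 ⟨by omega, by omega⟩))
  · rintro ⟨h1, h2⟩
    refine ⟨hsub y h1 h2, h2, fun w hw => ?_⟩
    rw [Finset.mem_Icc] at hw
    exact hsub w (by omega) hw.2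

theorem rightRun_eq {σ : Finset ℕ} {b x : ℕ} (hxb : x ≤ b) (hsub : ∀ y, x ≤ y → y < b → y ∈ σ)
    (hb : b ∉ σ) : rightRun σ x = b - x := by
  rw [rightRun, ← Nat.card_Ico]
  congr 1
  ext y
  simp only [Finset.mem_filter, Finset.mem_Ico]
  constructor
  · rintro ⟨h1, h2, h3⟩
    refine ⟨h2, ?_⟩
    by_contra hlt
    exact hb (h3 (Finset.mem_Icc.2 ⟨by omega, by omega⟩))
  · rintro ⟨h1, h2⟩
    refine ⟨hsub y h1 h2, h1, fun w hw => ?_⟩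
    rw [Finset.mem_Icc] at hw
    exact hsub w hw.1 (by omega)

theorem sum_dvd_succ (e L : ℕ) : (∑ x ∈ Finset.range L, if e ∣ x + 1 then 1 else 0) = L / e := by
  induction L with
  | zero => simp
  | succ L ih => rw [Finset.sum_range_succ, ih, Nat.succ_div]

theorem sum_dvd_add_two {d : ℕ} (hd : 2 ≤ d) (L : ℕ) :
    (∑ x ∈ Finset.range L, if d ∣ x + 2 then 1 else 0) = (L + 1) / d := by
  induction L with
  | zero => simp [Nat.div_eq_of_lt hd]
  | succ L ih => rw [Finset.sum_range_succ, ih, Nat.succ_div (a := L + 1)]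

theorem partWeight_left_run {d n b : ℕ} {σ : Finset ℕ} (hsub : ∀ y < b, y ∈ σ) :
    partWeight d n σ 0 b = b / endPeriod d := by
  rw [← sum_dvd_succ, partWeight, Nat.Ico_zero_eq_range]
  refine Finset.sum_congr rfl fun x hx => ?_
  rw [Finset.mem_range] at hx
  have h1 : Finset.Icc 0 x ⊆ σ := fun y hy => hsub y (by rw [Finset.mem_Icc] at hy; omega)
  simp [Contributes, h1, hsub x hx, leftRun_eq_s12 (Nat.zero_le x) (fun y _ hy => hsub y (by omega))
    (Or.inl rfl)]

theorem partWeight_right_run {d n z : ℕ} {σ : Finset ℕ} (hσ : σ ⊆ Finset.range (n + 1))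
    (hz : z ∉ σ) (hzn : z ≤ n) (hsub : ∀ y, z < y → y ≤ n → y ∈ σ) :
    partWeight d n σ (z + 1) (n + 1) = (n - z) / endPeriod d := by
  rw [← sum_dvd_succ, partWeight, Finset.sum_Ico_eq_sum_range, Nat.add_sub_add_right,
    ← Finset.sum_range_reflect]
  refine Finset.sum_congr rfl fun x hx => ?_
  rw [Finset.mem_range] at hx
  have h0 : ¬ Finset.Icc 0 (z + 1 + (n - z - 1 - x)) ⊆ σ := fun h =>
    hz (h (Finset.mem_Icc.2 ⟨by omega, by omega⟩))
  have h1 : Finset.Icc (z + 1 + (n - z - 1 - x)) n ⊆ σ := fun y hy => by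
    rw [Finset.mem_Icc] at hy; exact hsub y (by omega) hy.2
  have h2 : n + 1 ∉ σ := fun h => by simpa using hσ h
  have h3 := rightRun_eq (σ := σ) (x := z + 1 + (n - z - 1 - x)) (b := n + 1) (by omega)
    (fun y hy1 hy2 => hsub y (by omega) (by omega)) h2
  have h4 : n + 1 - (z + 1 + (n - z - 1 - x)) = x + 1 := by omega
  rw [h4] at h3
  simp [Contributes, h0, h1, h3, hsub (z + 1 + (n - z - 1 - x)) (by omega) (by omega)]

theorem partWeight_middle_run {d n z b : ℕ} {σ : Finset ℕ} (hd : 2 ≤ d) (hz : z ∉ σ) (hzb : z < b)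
    (hbn : b ≤ n) (hb : b ∉ σ) (hsub : ∀ y, z < y → y < b → y ∈ σ) :
    partWeight d n σ (z + 1) b = (b - z) / d := by
  have := sum_dvd_add_two hd (b - z - 1)
  rw [show b - z - 1 + 1 = b - z by omega] at this
  rw [← this, partWeight, Finset.sum_Ico_eq_sum_range, Nat.sub_sub]
  refine Finset.sum_congr rfl fun x hx => ?_
  rw [Finset.mem_range] at hx
  have h0 : ¬ Finset.Icc 0 (z + 1 + x) ⊆ σ := fun h =>
    hz (h (Finset.mem_Icc.2 ⟨by omega, by omega⟩))
  have h1 : ¬ Finset.Icc (z + 1 + x) n ⊆ σ := fun h =>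
    hb (h (Finset.mem_Icc.2 ⟨by omega, by omega⟩))
  have h3 := leftRun_eq_s12 (σ := σ) (x := z + 1 + x) (a := z + 1) (by omega)
    (fun y hy1 hy2 => hsub y (by omega) (by omega)) (Or.inr (by simpa using hz))
  have h4 : z + 1 + x + 1 - (z + 1) = x + 1 := by omega
  rw [h4] at h3
  simp [Contributes, h0, h1, h3, hsub (z + 1 + x) (by omega) (by omega)]

/-- Removing a vertex `m` from the run `(z, T)` in the interior of `{0, …, n}`. -/
theorem vTC_erase_of_middle {d n z m T : ℕ} {σ : Finset ℕ} (hd : 2 ≤ d)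
    (hσ : σ ⊆ Finset.range (n + 1)) (hz : z ∉ σ) (hzm : z < m) (hmT : m < T) (hTn : T ≤ n)
    (hT : T ∉ σ) (hsub : ∀ y, z < y → y < T → y ∈ σ)
    (hdiv : (m - z) / d + (T - m) / d = (T - z) / d) :
    vTC d n (σ.erase m) = vTC d n σ := by
  have hz' : z ∉ σ.erase m := fun h => hz (Finset.mem_of_mem_erase h)
  have hT' : T ∉ σ.erase m := fun h => hT (Finset.mem_of_mem_erase h)
  have hsub' : ∀ y, z < y → y < T → y ≠ m → y ∈ σ.erase m := fun y h1 h2 h3 =>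
    Finset.mem_erase.2 ⟨h3, hsub y h1 h2⟩
  have hm' : m ∉ σ.erase m := by simp
  rw [vTC_eq_partWeight hσ, vTC_eq_partWeight ((Finset.erase_subset _ _).trans hσ)]
  have split : ∀ ρ : Finset ℕ, z ∉ ρ → T ∉ ρ → partWeight d n ρ 0 (n + 1) =
      partWeight d n ρ 0 z + partWeight d n ρ (z + 1) T + partWeight d n ρ (T + 1) (n + 1) := by
    intro ρ h1 h2
    rw [← partWeight_add (Nat.zero_le z) (by omega : z ≤ n + 1),
      ← partWeight_add (by omega : z ≤ z + 1) (by omega : z + 1 ≤ n + 1),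
      ← partWeight_add (by omega : z + 1 ≤ T) (by omega : T ≤ n + 1),
      ← partWeight_add (by omega : T ≤ T + 1) (by omega : T + 1 ≤ n + 1), partWeight_succ h1,
      partWeight_succ h2]
    ring
  rw [split _ hz hT, split _ hz' hT',
    partWeight_congr_below (by omega) hz' hz (fun x hx => by simp; omega),
    partWeight_congr_above hT' hT (fun x hx => by simp; omega),
    ← partWeight_add (by omega : z + 1 ≤ m) (by omega : m ≤ T),
    ← partWeight_add (by omega : m ≤ m + 1) (by omega : m + 1 ≤ T), partWeight_succ hm',
    partWeight_middle_run hd hz (by omega) hTn hT hsub,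
    partWeight_middle_run hd hz' hzm (by omega) hm'
      (fun y h1 h2 => hsub' y h1 (by omega) (by omega)),
    partWeight_middle_run hd hm' hmT hTn hT' (fun y h1 h2 => hsub' y (by omega) h2 (by omega)),
    Nat.zero_add, hdiv]

/-- Removing a vertex `m` from the run `(z, n]` at the right end of `{0, …, n}`. -/
theorem vTC_erase_of_end {d n z m : ℕ} {σ : Finset ℕ} (hd : 2 ≤ d)
    (hσ : σ ⊆ Finset.range (n + 1)) (hz : z ∉ σ) (hzm : z < m) (hmn : m ≤ n)
    (hsub : ∀ y, z < y → y ≤ n → y ∈ σ)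
    (hdiv : (m - z) / d + (n - m) / endPeriod d = (n - z) / endPeriod d) :
    vTC d n (σ.erase m) = vTC d n σ := by
  have hz' : z ∉ σ.erase m := fun h => hz (Finset.mem_of_mem_erase h)
  have hsub' : ∀ y, z < y → y ≤ n → y ≠ m → y ∈ σ.erase m := fun y h1 h2 h3 =>
    Finset.mem_erase.2 ⟨h3, hsub y h1 h2⟩
  have hm' : m ∉ σ.erase m := by simp
  have hσ' := (Finset.erase_subset m σ).trans hσ
  rw [vTC_eq_partWeight hσ, vTC_eq_partWeight hσ']
  have split : ∀ ρ : Finset ℕ, z ∉ ρ → partWeight d n ρ 0 (n + 1) =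
      partWeight d n ρ 0 z + partWeight d n ρ (z + 1) (n + 1) := by
    intro ρ h1
    rw [← partWeight_add (Nat.zero_le z) (by omega : z ≤ n + 1),
      ← partWeight_add (by omega : z ≤ z + 1) (by omega : z + 1 ≤ n + 1), partWeight_succ h1,
      Nat.zero_add]
  rw [split _ hz, split _ hz',
    partWeight_congr_below (by omega) hz' hz (fun x hx => by simp; omega),
    partWeight_right_run hσ hz (by omega) hsub,
    ← partWeight_add (by omega : z + 1 ≤ m) (by omega : m ≤ n + 1),
    ← partWeight_add (by omega : m ≤ m + 1) (by omega : m + 1 ≤ n + 1), partWeight_succ hm',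
    partWeight_middle_run hd hz' hzm (by omega) hm'
      (fun y h1 h2 => hsub' y h1 (by omega) (by omega)),
    partWeight_right_run hσ' hm' hmn (fun y h1 h2 => hsub' y (by omega) h2 (by omega)),
    Nat.zero_add, hdiv]

/-! ### The pivot rule for odd `d` -/

/-- Toggle the last vertex whenever some other vertex is missing. -/
def LastPivot (n : ℕ) (σ : Finset ℕ) (m : ℕ) : Prop := m = n ∧ ∃ z < m, z ∉ σ

theorem isPivotRule_lastPivot (n : ℕ) : IsPivotRule n (LastPivot n) where
  unique h h' := h.1.trans h'.1.symm
  insert_self := by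
    rintro σ m ⟨rfl, z, hz, hzσ⟩
    exact ⟨rfl, z, hz, by simp [hzσ]; omega⟩
  erase := by
    rintro σ m y ⟨rfl, z, hz, hzσ⟩ -
    exact ⟨rfl, z, hz, by simp [hzσ]⟩
  le h := h.1.le
  exists_notMem h := h.2

/-- The largest vertex below `m` missing from `σ`. -/
theorem exists_max_notMem {σ : Finset ℕ} {z m : ℕ} (hz : z ∉ σ) (hzm : z < m) :
    ∃ w, z ≤ w ∧ w < m ∧ w ∉ σ ∧ ∀ y, w < y → y < m → y ∈ σ := by
  classical
  have hne : ((Finset.range m).filter (· ∉ σ)).Nonempty := ⟨z, by simp [hz, hzm]⟩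
  have hmem := Finset.max'_mem _ hne
  rw [Finset.mem_filter, Finset.mem_range] at hmem
  refine ⟨_, Finset.le_max' _ _ (by simp [hz, hzm]), hmem.1, hmem.2, fun y hy hym => ?_⟩
  by_contra hyσ
  have := Finset.le_max' ((Finset.range m).filter (· ∉ σ)) y (by simp [hyσ, hym])
  omega

theorem isWeighted_lastPivot {d n : ℕ} (hd : 2 ≤ d) (hodd : d % 2 = 1) :
    IsWeighted (vTC d n) (pivotMatching n (LastPivot n)) := by
  rintro ⟨τ, σ⟩ ⟨hσ, m, ⟨rfl, z, hz, hzσ⟩, hmσ, rfl : τ = σ.erase m⟩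
  obtain ⟨w, -, hwm, hwσ, hw⟩ := exists_max_notMem hzσ hz
  refine vTC_erase_of_end hd hσ hwσ hwm le_rfl (fun y h1 h2 => ?_) ?_
  · rcases h2.eq_or_lt with rfl | h2
    · exact hmσ
    · exact hw y h1 h2
  · simp [endPeriod, hodd]

theorem isCritical_lastPivot {n : ℕ} (σ : Finset ℕ) :
    IsCritical {σ | σ ⊆ Finset.range (n + 1) ∧ σ ≠ Finset.range (n + 1)}
      (pivotMatching n (LastPivot n)) σ ↔ σ = Finset.range n := by
  rw [(isPivotRule_lastPivot n).isCritical_iff]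
  constructor
  · rintro ⟨⟨hσ, hne⟩, hno⟩
    have hlt : ∀ z < n, z ∈ σ := fun z hz => by
      by_contra hzσ
      exact hno n ⟨rfl, z, hz, hzσ⟩
    have hn : n ∉ σ := fun h => hne <| hσ.antisymm fun x hx => by
      rcases (Nat.lt_succ_iff.1 (Finset.mem_range.1 hx)).eq_or_lt with rfl | hx
      · exact h
      · exact hlt x hx
    ext x
    rw [Finset.mem_range]
    refine ⟨fun hx => ?_, hlt x⟩
    have h1 := Finset.mem_range.1 (hσ hx)
    have h2 : x ≠ n := fun h => hn (h ▸ hx)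
    omega
  · rintro rfl
    refine ⟨⟨Finset.range_mono (Nat.le_succ n), fun h => ?_⟩, ?_⟩
    · have := congrArg Finset.card h
      simp at this
    · rintro m ⟨rfl, z, hz, hzσ⟩
      simp at hzσ
      omega

/-! ### The pivot rule for even `d = 2 * e` -/

/-- To the right of `m`, the set `σ` contains every vertex not congruent to `n` modulo `e`,
and among those congruent to `n` it contains a final segment; moreover `m ≡ n`. -/
structure Tail (e n : ℕ) (σ : Finset ℕ) (m : ℕ) : Prop where
  le : m ≤ n
  mod_eq : m % e = n % e
  mem : ∀ x, m < x → x ≤ n → x % e ≠ n % e → x ∈ σ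
  mono : ∀ x y, m < x → x < y → y ≤ n → x % e = n % e → y % e = n % e → x ∈ σ → y ∈ σ

/-- A missing vertex at `t`, preceded by a run of length at least `2 * e - 1`. -/
structure LongRun (e n : ℕ) (σ : Finset ℕ) (t : ℕ) : Prop where
  tail : Tail e n σ t
  notMem : t ∉ σ
  le : 2 * e ≤ t
  mem : ∀ x, t < x + 2 * e → x < t → x ∈ σ

/-- A tail starting at `m`, preceded by fewer than `e - 1` consecutive vertices. -/
def ShortPivot (e n : ℕ) (σ : Finset ℕ) (m : ℕ) : Prop :=
  Tail e n σ m ∧ ∃ z < m, m < z + e ∧ z ∉ σ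

/-- The vertex cutting a run of length `2 * e - 1` off a longer run not containing `0`. -/
def LongPivot (e n : ℕ) (σ : Finset ℕ) (m : ℕ) : Prop :=
  LongRun e n σ (m + 2 * e) ∧ ∃ z < m, z ∉ σ

/-- The pivot rule for `d = 2 * e`. -/
def EvenPivot (e n : ℕ) (σ : Finset ℕ) (m : ℕ) : Prop :=
  ShortPivot e n σ m ∨ LongPivot e n σ m

theorem add_le_of_mod_eq {e a b : ℕ} (h : a % e = b % e) (hab : a < b) : a + e ≤ b := by
  have h1 : e ∣ b - a := (Nat.modEq_iff_dvd' hab.le).1 h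
  have := Nat.le_of_dvd (by omega) h1
  omega

theorem Tail.congr {e n m : ℕ} {σ σ' : Finset ℕ} (h : Tail e n σ m)
    (hσ : ∀ x, m < x → (x ∈ σ ↔ x ∈ σ')) : Tail e n σ' m where
  le := h.le
  mod_eq := h.mod_eq
  mem x h1 h2 h3 := (hσ x h1).1 (h.mem x h1 h2 h3)
  mono x y h1 h2 h3 h4 h5 h6 :=
    (hσ y (by omega)).1 (h.mono x y h1 h2 h3 h4 h5 ((hσ x h1).2 h6))

theorem LongRun.congr {e n t m : ℕ} (he : 0 < e) {σ σ' : Finset ℕ} (h : LongRun e n σ t)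
    (hm : m + 2 * e = t) (hσ : ∀ x, m < x → (x ∈ σ ↔ x ∈ σ')) : LongRun e n σ' t where
  tail := h.tail.congr fun x hx => hσ x (by omega)
  notMem := fun hc => h.notMem ((hσ t (by omega)).2 hc)
  le := h.le
  mem x h1 h2 := (hσ x (by omega)).1 (h.mem x h1 h2)

theorem EvenPivot.congr {e n m : ℕ} (he : 0 < e) {σ σ' : Finset ℕ} (h : EvenPivot e n σ m)
    (hσ : ∀ x, m < x → (x ∈ σ ↔ x ∈ σ')) (hle : ∀ x < m, x ∈ σ' → x ∈ σ) :
    EvenPivot e n σ' m := by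
  rcases h with ⟨h, z, hz, hz', hzσ⟩ | ⟨h, z, hz, hzσ⟩
  · exact Or.inl ⟨h.congr hσ, z, hz, hz', fun hc => hzσ (hle z hz hc)⟩
  · exact Or.inr ⟨h.congr he rfl hσ, z, hz, fun hc => hzσ (hle z hz hc)⟩

theorem ShortPivot.le_of_tail {e n m m' : ℕ} {σ : Finset ℕ} (h : ShortPivot e n σ m)
    (h' : Tail e n σ m') : m ≤ m' := by
  obtain ⟨ht, z, hz, hz', hzσ⟩ := h
  by_contra! hlt
  have hle := add_le_of_mod_eq (h'.mod_eq.trans ht.mod_eq.symm) hlt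
  refine hzσ (h'.mem z (by omega) (by have := ht.le; omega) fun hc => ?_)
  have := add_le_of_mod_eq (hc.trans ht.mod_eq.symm) hz
  omega

theorem LongRun.le_add_of_tail {e n t t' : ℕ} (he : 0 < e) {σ : Finset ℕ} (h : LongRun e n σ t)
    (h' : Tail e n σ t') : t ≤ t' + e := by
  by_contra! hlt
  have hle := h.le
  have hmod : (t - e) % e = t % e := by
    rw [← Nat.add_mod_right (t - e), Nat.sub_add_cancel (by omega)]
  exact h.notMem (h'.mono (t - e) t (by omega) (by omega) h.tail.le (hmod.trans h.tail.mod_eq)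
    h.tail.mod_eq (h.mem _ (by omega) (by omega)))

theorem ShortPivot.not_longRun {e n m t : ℕ} (he : 0 < e) {σ : Finset ℕ} (h : ShortPivot e n σ m) :
    ¬ LongRun e n σ t := fun h' => by
  have h1 := h.le_of_tail h'.tail
  have h2 := h'.le_add_of_tail he h.1
  obtain ⟨ht, z, hz, hz', hzσ⟩ := h
  exact hzσ (h'.mem z (by omega) (by omega))

theorem LongRun.unique {e n t t' : ℕ} (he : 0 < e) {σ : Finset ℕ} (h : LongRun e n σ t)
    (h' : LongRun e n σ t') : t = t' := by
  have h1 := h.le_add_of_tail he h'.tail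
  have h2 := h'.le_add_of_tail he h.tail
  rcases lt_trichotomy t t' with hlt | rfl | hlt
  · exact absurd (h'.mem t (by omega) hlt) h.notMem
  · rfl
  · exact absurd (h.mem t' (by omega) hlt) h'.notMem

theorem isPivotRule_evenPivot {e : ℕ} (he : 0 < e) (n : ℕ) : IsPivotRule n (EvenPivot e n) where
  unique := by
    rintro σ m m' (h | h) (h' | h')
    · exact le_antisymm (h.le_of_tail h'.1) (h'.le_of_tail h.1)
    · exact absurd h'.1 (h.not_longRun he)
    · exact absurd h.1 (h'.not_longRun he)
    · have := h.1.unique he h'.1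
      omega
  insert_self {σ m} h := h.congr he (fun x hx => by simp; omega) (fun x hx hc => by
    rw [Finset.mem_insert] at hc
    exact hc.resolve_left hx.ne)
  erase {σ m y} h hy := h.congr he (fun x hx => by simp; omega)
    (fun x hx => Finset.mem_of_mem_erase)
  le := by
    rintro σ m (h | h)
    · exact h.1.le
    · have := h.1.tail.le
      omega
  exists_notMem := by
    rintro σ m (⟨_, z, h1, _, h2⟩ | ⟨_, z, h1, h2⟩)
    · exact ⟨z, h1, h2⟩
    · exact ⟨z, h1, h2⟩

/-- Every proper subset has a pivot unless it has one of two critical shapes. -/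
theorem exists_evenPivot_or {e n : ℕ} (he : 0 < e) {σ : Finset ℕ}
    (hσ : σ ⊆ Finset.range (n + 1)) (hne : σ ≠ Finset.range (n + 1)) :
    (∃ m, EvenPivot e n σ m) ∨ (∃ t, Tail e n σ t ∧ t ∉ σ ∧ ∀ x < t, x ∈ σ) ∨
      ∃ m, LongRun e n σ (m + 2 * e) ∧ m ∉ σ ∧ ∀ x < m, x ∈ σ := by
  classical
  have hex : ∃ m, Tail e n σ m :=
    ⟨n, le_rfl, rfl, fun x _ _ => by omega, fun x y _ _ _ => by omega⟩
  obtain ⟨m, hm, hmin⟩ : ∃ m, Tail e n σ m ∧ ∀ m' < m, ¬ Tail e n σ m' :=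
    ⟨Nat.find hex, Nat.find_spec hex, fun m' => Nat.find_min hex⟩
  by_cases hz : ∃ z < m, m < z + e ∧ z ∉ σ
  · exact Or.inl ⟨m, Or.inl ⟨hm, hz⟩⟩
  push Not at hz
  have hlow : m < e → ∀ x < m, x ∈ σ := fun h x hx => hz x hx (by omega)
  suffices h : (m < e ∧ m ∉ σ) ∨ (m ∈ σ ∧ ∃ y, m < y ∧ y ≤ n ∧ y % e = n % e ∧ y ∉ σ) by
    rcases h with ⟨hme, hmσ⟩ | ⟨hmσ, y, hmy, hyn, hye, hyσ⟩
    · exact Or.inr (Or.inl ⟨m, hm, hmσ, hlow hme⟩)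
    have hle := add_le_of_mod_eq (hm.mod_eq.trans hye.symm) hmy
    have hmod : (m + e) % e = n % e := by rw [Nat.add_mod_right, hm.mod_eq]
    have htσ : m + e ∉ σ := fun h => by
      rcases hle.eq_or_lt with rfl | hlt
      · exact hyσ h
      · exact hyσ (hm.mono _ _ (by omega) hlt hyn hmod hye h)
    have ht : Tail e n σ (m + e) :=
      ⟨by omega, hmod, fun x h1 => hm.mem x (by omega), fun x y h1 => hm.mono x y (by omega)⟩
    have hrun : ∀ x, m < x + e → x < m + e → x ∈ σ := fun x h1 h2 => by
      rcases lt_trichotomy x m with hx | rfl | hx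
      · exact hz x hx h1
      · exact hmσ
      · refine hm.mem x hx (by omega) fun hc => ?_
        have := add_le_of_mod_eq (hm.mod_eq.trans hc.symm) hx
        omega
    rcases Nat.lt_or_ge m e with hme | hme
    · exact Or.inr (Or.inl ⟨m + e, ht, htσ, fun x hx => hrun x (by omega) hx⟩)
    have heq : m - e + 2 * e = m + e := by omega
    have hlong : LongRun e n σ (m - e + 2 * e) := by
      rw [heq]
      exact ⟨ht, htσ, by omega, fun x h1 h2 => hrun x (by omega) h2⟩
    by_cases hz' : ∃ z < m - e, z ∉ σ
    · exact Or.inl ⟨m - e, Or.inr ⟨hlong, hz'⟩⟩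
    push Not at hz'
    by_cases hmσ' : m - e ∈ σ
    · refine Or.inr (Or.inl ⟨m + e, ht, htσ, fun x hx => ?_⟩)
      rcases lt_trichotomy x (m - e) with h | rfl | h
      · exact hz' x h
      · exact hmσ'
      · exact hrun x (by omega) hx
    · exact Or.inr (Or.inr ⟨m - e, hlong, hmσ', hz'⟩)
  rcases Nat.lt_or_ge m e with hme | hme
  · by_cases hmσ : m ∈ σ
    · refine Or.inr ⟨hmσ, ?_⟩
      by_contra! hall
      refine hne (hσ.antisymm fun x hx => ?_)
      rw [Finset.mem_range] at hx
      rcases lt_trichotomy x m with h | rfl | h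
      · exact hlow hme x h
      · exact hmσ
      · by_cases hxe : x % e = n % e
        · exact hall x h (by omega) hxe
        · exact hm.mem x h (by omega) hxe
    · exact Or.inl ⟨hme, hmσ⟩
  · right
    by_contra! hall
    have hmod : (m - e) % e = m % e := by
      rw [← Nat.add_mod_right (m - e), Nat.sub_add_cancel hme]
    have hge : ∀ x, m - e < x → x % e = n % e → m ≤ x := fun x h1 h2 => by
      have := add_le_of_mod_eq (hmod.trans (hm.mod_eq.trans h2.symm)) h1
      omega
    refine hmin (m - e) (by omega) ⟨by have := hm.le; omega, hmod.trans hm.mod_eq, ?_, ?_⟩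
    · intro x h1 h2 h3
      rcases lt_trichotomy x m with h | rfl | h
      · exact hz x h (by omega)
      · exact absurd hm.mod_eq h3
      · exact hm.mem x h h2 h3
    · intro x y h1 h2 h3 h4 h5 h6
      rcases (hge x h1 h4).eq_or_lt with rfl | h
      · exact hall h6 y h2 h3 h5
      · exact hm.mono x y h h2 h3 h4 h5 h6

theorem not_evenPivot_of_tail {e n t : ℕ} (he : 0 < e) {σ : Finset ℕ} (ht : Tail e n σ t)
    (hlow : ∀ x < t, x ∈ σ) (m : ℕ) : ¬ EvenPivot e n σ m := by
  rintro (h | ⟨h, z, hz, hzσ⟩)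
  · have := h.le_of_tail ht
    obtain ⟨-, z, hz, -, hzσ⟩ := h
    exact hzσ (hlow z (by omega))
  · have h1 := h.le_add_of_tail he ht
    exact hzσ (hlow z (by omega))

theorem not_evenPivot_of_longRun {e n m : ℕ} (he : 0 < e) {σ : Finset ℕ}
    (hm : LongRun e n σ (m + 2 * e)) (hlow : ∀ x < m, x ∈ σ) (m' : ℕ) : ¬ EvenPivot e n σ m' := by
  rintro (h | ⟨h, z, hz, hzσ⟩)
  · exact h.not_longRun he hm
  · have := h.unique he hm
    exact hzσ (hlow z (by omega))

theorem endPeriod_two_mul (e : ℕ) : endPeriod (2 * e) = e := by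
  simp [endPeriod]

theorem isWeighted_evenPivot {e n : ℕ} (he : 0 < e) :
    IsWeighted (vTC (2 * e) n) (pivotMatching n (EvenPivot e n)) := by
  rintro ⟨τ, σ⟩ ⟨hσ, m, h, hmσ, rfl : τ = σ.erase m⟩
  have hrun : ∀ {w T}, (∀ y, w < y → y < m → y ∈ σ) → (∀ y, m < y → y < T → y ∈ σ) →
      ∀ y, w < y → y < T → y ∈ σ := fun h1 h2 y hy hyT => by
    rcases lt_trichotomy y m with h | rfl | h
    · exact h1 y hy h
    · exact hmσ
    · exact h2 y h hyT
  rcases h with ⟨ht, z, hz, hz', hzσ⟩ | ⟨hl, z, hz, hzσ⟩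
  · obtain ⟨w, hzw, hwm, hwσ, hw⟩ := exists_max_notMem hzσ hz
    have hdvd : e ∣ n - m := (Nat.modEq_iff_dvd' ht.le).1 ht.mod_eq
    by_cases hT : m + e ≤ n ∧ m + e ∉ σ
    · refine vTC_erase_of_middle (by omega) hσ hwσ hwm (by omega) hT.1 hT.2
        (hrun hw fun y h1 h2 => ?_) ?_
      · refine ht.mem y h1 (by omega) fun hc => ?_
        have := add_le_of_mod_eq (ht.mod_eq.trans hc.symm) h1
        omega
      · rw [Nat.div_eq_of_lt (by omega), Nat.div_eq_of_lt (by omega), Nat.div_eq_of_lt (by omega)]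
    · refine vTC_erase_of_end (by omega) hσ hwσ hwm ht.le
        (fun y h1 h2 => hrun (T := n + 1) hw (fun y h1 h2 => ?_) y h1 (by omega)) ?_
      · by_cases hc : y % e = n % e
        · have hle := add_le_of_mod_eq (ht.mod_eq.trans hc.symm) h1
          have hT' : m + e ∈ σ := by
            by_contra h
            exact hT ⟨by omega, h⟩
          rcases hle.eq_or_lt with rfl | hlt
          · exact hT'
          · exact ht.mono _ _ (by omega) hlt (by omega)
              (by rw [Nat.add_mod_right, ht.mod_eq]) hc hT'
        · exact ht.mem y h1 (by omega) hc
      · obtain ⟨q, hq⟩ := hdvd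
        have := ht.le
        have : n - w = m - w + e * q := by omega
        rw [endPeriod_two_mul, this, hq, Nat.add_mul_div_left _ _ he, Nat.mul_div_cancel_left _ he,
          Nat.div_eq_of_lt (by omega), Nat.div_eq_of_lt (by omega)]
  · obtain ⟨w, -, hwm, hwσ, hw⟩ := exists_max_notMem hzσ hz
    refine vTC_erase_of_middle (by omega) hσ hwσ hwm (by omega) hl.tail.le hl.notMem
      (hrun hw fun y h1 h2 => hl.mem y (by omega) h2) ?_
    rw [show m + 2 * e - w = m - w + 2 * e by omega, Nat.add_div_right _ (by omega),
      Nat.add_sub_cancel_left, Nat.div_self (by omega)]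

/-! ### The critical simplices for even `d = 2 * e` -/

/-- From `t` on, the set `σ` is `0 (1^{e-1} 0)^* 1^*`, the last `0` being at `c`. -/
structure TailShape (e n : ℕ) (σ : Finset ℕ) (t c : ℕ) : Prop where
  le : t ≤ c
  le' : c ≤ n
  mod_eq : t % e = n % e
  mod_eq' : c % e = n % e
  mem_iff : ∀ x, t ≤ x → (x ∈ σ ↔ x ≤ n ∧ (c < x ∨ x % e ≠ n % e))

theorem TailShape.notMem {e n t c : ℕ} {σ : Finset ℕ} (h : TailShape e n σ t c) : t ∉ σ := by
  have h1 := h.le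
  have h2 := h.mod_eq
  rw [h.mem_iff t le_rfl]
  rintro ⟨-, h3 | h3⟩
  · omega
  · exact h3 h2

theorem TailShape.tail {e n t c : ℕ} {σ : Finset ℕ} (h : TailShape e n σ t c) : Tail e n σ t where
  le := h.le.trans h.le'
  mod_eq := h.mod_eq
  mem x h1 h2 h3 := (h.mem_iff x h1.le).2 ⟨h2, Or.inr h3⟩
  mono x y h1 h2 h3 h4 h5 h6 := by
    rcases (h.mem_iff x h1.le).1 h6 with ⟨_, h7 | h7⟩
    · exact (h.mem_iff y (by omega)).2 ⟨h3, Or.inl (by omega)⟩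
    · exact absurd h4 h7

theorem Tail.exists_tailShape {e n t : ℕ} {σ : Finset ℕ} (hσ : σ ⊆ Finset.range (n + 1))
    (h : Tail e n σ t) (ht : t ∉ σ) : ∃ c, TailShape e n σ t c := by
  classical
  obtain ⟨c, hmem, hmax⟩ :=
    ((Finset.Icc t n).filter fun x => x % e = n % e ∧ x ∉ σ).exists_max_image id
      ⟨t, by simp [h.le, h.mod_eq, ht]⟩
  simp only [Finset.mem_filter, Finset.mem_Icc, id] at hmem hmax
  obtain ⟨⟨h1, h2⟩, h3, h4⟩ := hmem
  refine ⟨c, h1, h2, h.mod_eq, h3, fun x hx => ⟨fun hxσ => ?_, fun hx' => ?_⟩⟩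
  · have hxn : x ≤ n := by have := Finset.mem_range.1 (hσ hxσ); omega
    refine ⟨hxn, ?_⟩
    by_contra! hc
    have hxt : t ≠ x := fun he => ht (he ▸ hxσ)
    have hxc : x ≠ c := fun he => h4 (he ▸ hxσ)
    exact h4 (h.mono x c (by omega) (by omega) h2 hc.2 h3 hxσ)
  · obtain ⟨hxn, hx'⟩ := hx'
    by_cases hxe : x % e = n % e
    · by_contra hxσ
      have := hmax x ⟨⟨hx, hxn⟩, hxe, hxσ⟩
      rcases hx' with h | h
      · omega
      · exact h hxe
    · refine h.mem x (lt_of_le_of_ne hx ?_) hxn hxe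
      rintro rfl
      exact hxe h.mod_eq

theorem TailShape.partWeight_eq {e n t c : ℕ} (he : 0 < e) {σ : Finset ℕ}
    (hσ : σ ⊆ Finset.range (n + 1)) (h : TailShape e n σ t c) :
    partWeight (2 * e) n σ (t + 1) (n + 1) = (n - c) / e := by
  obtain ⟨j, hj⟩ : e ∣ c - t := (Nat.modEq_iff_dvd' h.le).1 (h.mod_eq.trans h.mod_eq'.symm)
  induction j generalizing t with
  | zero =>
    have hle := h.le
    obtain rfl : t = c := by omega
    rw [partWeight_right_run hσ h.notMem h.le'
      (fun y h1 h2 => (h.mem_iff y h1.le).2 ⟨h2, Or.inl h1⟩), endPeriod_two_mul]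
  | succ j ih =>
    rw [Nat.mul_succ] at hj
    have hc := h.le'
    have h' : TailShape e n σ (t + e) c :=
      ⟨by omega, hc, by rw [Nat.add_mod_right, h.mod_eq], h.mod_eq',
        fun x hx => h.mem_iff x (by omega)⟩
    rw [← partWeight_add (by omega : t + 1 ≤ t + e) (by omega : t + e ≤ n + 1),
      ← partWeight_add (by omega : t + e ≤ t + e + 1) (by omega : t + e + 1 ≤ n + 1),
      ih h' (by omega), partWeight_succ h'.notMem,
      partWeight_middle_run (by omega) h.notMem (by omega) (by omega) h'.notMem,
      Nat.div_eq_of_lt (by omega)]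
    · simp
    · intro y h1 h2
      refine (h.mem_iff y h1.le).2 ⟨by omega, Or.inr fun hy => ?_⟩
      have := add_le_of_mod_eq (h.mod_eq.trans hy.symm) h1
      omega

theorem TailShape.vTC_eq {e n t c : ℕ} (he : 0 < e) {σ : Finset ℕ}
    (hσ : σ ⊆ Finset.range (n + 1)) (h : TailShape e n σ t c) (hlow : ∀ x < t, x ∈ σ) :
    vTC (2 * e) n σ = t / e + (n - c) / e := by
  have := h.tail.le
  rw [vTC_eq_partWeight hσ, ← partWeight_add (Nat.zero_le t) (by omega : t ≤ n + 1),
    ← partWeight_add (by omega : t ≤ t + 1) (by omega : t + 1 ≤ n + 1), partWeight_succ h.notMem,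
    h.partWeight_eq he hσ, partWeight_left_run hlow, endPeriod_two_mul, Nat.zero_add]

theorem TailShape.vTC_eq_of_longRun {e n m c : ℕ} (he : 0 < e) {σ : Finset ℕ}
    (hσ : σ ⊆ Finset.range (n + 1)) (h : TailShape e n σ (m + 2 * e) c) (hm : m ∉ σ)
    (hrun : ∀ x, m < x → x < m + 2 * e → x ∈ σ) (hlow : ∀ x < m, x ∈ σ) :
    vTC (2 * e) n σ = m / e + 1 + (n - c) / e := by
  have := h.tail.le
  rw [vTC_eq_partWeight hσ, ← partWeight_add (Nat.zero_le m) (by omega : m ≤ n + 1),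
    ← partWeight_add (by omega : m ≤ m + 1) (by omega : m + 1 ≤ n + 1),
    ← partWeight_add (by omega : m + 1 ≤ m + 2 * e) (by omega : m + 2 * e ≤ n + 1),
    ← partWeight_add (by omega : m + 2 * e ≤ m + 2 * e + 1) (by omega : m + 2 * e + 1 ≤ n + 1),
    partWeight_succ hm, partWeight_succ h.notMem, h.partWeight_eq he hσ, partWeight_left_run hlow,
    partWeight_middle_run (by omega) hm (by omega) (by omega) h.notMem hrun, endPeriod_two_mul,
    Nat.add_sub_cancel_left, Nat.div_self (by omega)]
  ring

/-! ### Subsets given by binary strings -/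

theorem mem_strSet {l : List Bool} {x : ℕ} : x ∈ strSet l ↔ l.getD x false = true := by
  rw [strSet, Finset.mem_filter, Finset.mem_range, and_iff_right_iff_imp]
  intro h
  by_contra hx
  rw [List.getD_eq_default _ _ (not_lt.1 hx)] at h
  exact Bool.false_ne_true h

theorem mem_strSet_append {l₁ l₂ : List Bool} {x : ℕ} :
    x ∈ strSet (l₁ ++ l₂) ↔
      x ∈ strSet l₁ ∨ l₁.length ≤ x ∧ x - l₁.length ∈ strSet l₂ := by
  simp only [mem_strSet]
  rcases Nat.lt_or_ge x l₁.length with h | h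
  · rw [List.getD_append _ _ _ _ h]
    simp [Nat.not_le.2 h]
  · rw [List.getD_append_right _ _ _ _ h, List.getD_eq_default l₁ _ h]
    simp [h]

theorem mem_strSet_one {a x : ℕ} : x ∈ strSet (one a) ↔ x < a := by
  rw [mem_strSet, one]
  rcases Nat.lt_or_ge x a with h | h <;> simp [h, Nat.not_lt.2]

theorem notMem_strSet_zero {a x : ℕ} : x ∉ strSet (zero a) := by
  simp [mem_strSet, zero]

theorem length_rep (j : ℕ) (l : List Bool) : (rep j l).length = j * l.length := by
  induction j with
  | zero => simp [rep]
  | succ j ih => simp [rep, ih]; ring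

theorem count_rep (j : ℕ) (l : List Bool) : (rep j l).count true = j * l.count true := by
  induction j with
  | zero => simp [rep]
  | succ j ih => simp [rep, ih]; ring

theorem card_strSet (l : List Bool) : (strSet l).card = l.count true := by
  induction l with
  | nil => simp [strSet]
  | cons a l ih =>
    rw [strSet, Finset.card_filter] at ih ⊢
    rw [List.length_cons, Finset.sum_range_succ', List.count_cons, ← ih]
    cases a <;> simp

theorem mem_strSet_rep {e j x : ℕ} (he : 0 < e) :
    x ∈ strSet (rep j (one (e - 1) ++ zero 1)) ↔ x < j * e ∧ ¬ e ∣ x + 1 := by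
  induction j generalizing x with
  | zero => simp [rep, strSet]
  | succ j ih =>
    have hlen : (one (e - 1) ++ zero 1).length = e := by simp [one, zero]; omega
    rw [rep, mem_strSet_append, hlen, ih, mem_strSet_append, mem_strSet_one]
    simp only [notMem_strSet_zero, and_false, or_false, Nat.succ_mul]
    rcases Nat.lt_or_ge x e with h | h
    · have : e ∣ x + 1 ↔ ¬ x < e - 1 :=
        ⟨fun hd => by have := Nat.le_of_dvd (by omega) hd; omega,
          fun hd => by rw [show x + 1 = e by omega]⟩
      rw [this, not_not]
      omega
    · have : e ∣ x - e + 1 ↔ e ∣ x + 1 := by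
        rw [show x + 1 = x - e + 1 + e by omega, Nat.dvd_add_self_right]
      rw [this]
      constructor
      · rintro (h1 | ⟨h1, h2, h3⟩)
        · omega
        · exact ⟨by omega, h3⟩
      · rintro ⟨h1, h2⟩
        exact Or.inr ⟨h, by omega, h2⟩

/-- The string `0 (1^{e-1} 0)^j 1^b` placed at position `t`. -/
theorem mem_strSet_tail {e t j b x : ℕ} (he : 0 < e) {l : List Bool} (hl : l.length = t) :
    x ∈ strSet (l ++ zero 1 ++ rep j (one (e - 1) ++ zero 1) ++ one b) ↔
      x ∈ strSet l ∨
        t ≤ x ∧ x < t + 1 + j * e + b ∧ (t + j * e < x ∨ x % e ≠ t % e) := by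
  have hlen : (one (e - 1) ++ zero 1).length = e := by simp [one, zero]; omega
  have hz : (zero 1).length = 1 := by simp [zero]
  rw [mem_strSet_append, mem_strSet_append, mem_strSet_append, mem_strSet_rep he, mem_strSet_one]
  simp only [List.length_append, length_rep, hlen, hz, hl, notMem_strSet_zero, and_false, or_false]
  rw [or_assoc]
  refine or_congr_right ?_
  rcases Nat.lt_or_ge x (t + 1) with h | h
  · constructor
    · omega
    · rintro ⟨h1, h2, h3 | h3⟩
      · omega
      · exact absurd (by rw [show x = t by omega]) h3
  · have : e ∣ x - (t + 1) + 1 ↔ x % e = t % e := by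
      rw [show x - (t + 1) + 1 = x - t by omega, ← Nat.modEq_iff_dvd' (by omega)]
      exact eq_comm
    rw [this]
    constructor
    · rintro (⟨h1, h2, h3⟩ | h1)
      · exact ⟨by omega, by omega, Or.inr h3⟩
      · exact ⟨by omega, by omega, Or.inl (by omega)⟩
    · rintro ⟨h1, h2, h3⟩
      by_cases h4 : t + j * e < x
      · exact Or.inr ⟨by omega, by omega⟩
      · refine Or.inl ⟨h, ?_, h3.resolve_left h4⟩
        omega

/-- The first run of `sigC'` is `[0, q₁ * e + r)`, and its last gap is at `n - q₂ * e`. -/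
theorem sigC'_spec {e n k r q₁ q₂ : ℕ} (he : 0 < e) (hn : n = k * e + r) (hq : q₁ + q₂ ≤ k) :
    sigC' (2 * e) k r q₁ q₂ ⊆ Finset.range (n + 1) ∧
      TailShape e n (sigC' (2 * e) k r q₁ q₂) (q₁ * e + r) (n - q₂ * e) ∧
      ∀ x < q₁ * e + r, x ∈ sigC' (2 * e) k r q₁ q₂ := by
  obtain ⟨j, rfl⟩ := Nat.exists_eq_add_of_le hq
  have hj : q₁ + q₂ + j - q₁ - q₂ = j := by omega
  have h2 : 2 * e / 2 = e := by omega
  have hn' : n = q₁ * e + r + j * e + q₂ * e := by rw [hn]; ring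
  have hmod : n % e = (q₁ * e + r) % e := by
    rw [hn', add_assoc, ← add_mul, Nat.add_mul_mod_self_right]
  have hone : (one (q₁ * e + r)).length = q₁ * e + r := by simp [one]
  have hmem : ∀ x, x ∈ sigC' (2 * e) (q₁ + q₂ + j) r q₁ q₂ ↔ x < q₁ * e + r ∨ q₁ * e + r ≤ x ∧
      x < q₁ * e + r + 1 + j * e + q₂ * e ∧ (q₁ * e + r + j * e < x ∨ x % e ≠ n % e) := by
    intro x
    rw [sigC', hj, h2, mem_strSet_tail he hone, mem_strSet_one, hmod]
  refine ⟨fun x hx => ?_, ⟨by omega, by omega, hmod.symm, ?_, fun x hx => ?_⟩, fun x hx => ?_⟩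
  · rw [hmem] at hx
    rw [Finset.mem_range]
    omega
  · rw [hmod, show n - q₂ * e = q₁ * e + r + j * e by omega, Nat.add_mul_mod_self_right]
  · rw [hmem]
    constructor
    · rintro (h | ⟨h1, h2, h3⟩)
      · omega
      · exact ⟨by omega, h3.imp_left (by omega)⟩
    · rintro ⟨h1, h3⟩
      exact Or.inr ⟨hx, by omega, h3.imp_left (by omega)⟩
  · exact (hmem x).2 (Or.inl hx)

theorem sigC_spec {e n k r q₁ q₂ : ℕ} (he : 0 < e) (hn : n = k * e + r) (hq : q₁ + q₂ + 2 ≤ k) :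
    sigC (2 * e) k r q₁ q₂ ⊆ Finset.range (n + 1) ∧
      TailShape e n (sigC (2 * e) k r q₁ q₂) (q₁ * e + r + 2 * e) (n - q₂ * e) ∧
      q₁ * e + r ∉ sigC (2 * e) k r q₁ q₂ ∧
      ∀ x < q₁ * e + r + 2 * e, x ≠ q₁ * e + r → x ∈ sigC (2 * e) k r q₁ q₂ := by
  obtain ⟨j, rfl⟩ := Nat.exists_eq_add_of_le hq
  have hj : q₁ + q₂ + 2 + j - q₁ - q₂ - 2 = j := by omega
  have h2 : 2 * e / 2 = e := by omega
  have hn' : n = q₁ * e + r + 2 * e + j * e + q₂ * e := by rw [hn]; ring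
  have hmod : n % e = (q₁ * e + r + 2 * e) % e := by
    rw [hn', add_assoc, ← add_mul, Nat.add_mul_mod_self_right]
  have hone : ∀ a, (one a).length = a := fun a => by simp [one]
  have hzero : (zero 1).length = 1 := by simp [zero]
  have hpre : (one (q₁ * e + r) ++ zero 1 ++ one (2 * e - 1)).length = q₁ * e + r + 2 * e := by
    simp only [List.length_append, hone, hzero]
    omega
  have hmem : ∀ x, x ∈ sigC (2 * e) (q₁ + q₂ + 2 + j) r q₁ q₂ ↔
      (x < q₁ * e + r + 2 * e ∧ x ≠ q₁ * e + r) ∨ q₁ * e + r + 2 * e ≤ x ∧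
      x < q₁ * e + r + 2 * e + 1 + j * e + q₂ * e ∧
        (q₁ * e + r + 2 * e + j * e < x ∨ x % e ≠ n % e) := by
    intro x
    rw [sigC, hj, h2, mem_strSet_tail he hpre, hmod, mem_strSet_append, mem_strSet_append]
    simp only [mem_strSet_one, notMem_strSet_zero, List.length_append, hone, hzero, and_false,
      or_false]
    refine or_congr_left ?_
    omega
  refine ⟨fun x hx => ?_, ⟨by omega, by omega, hmod.symm, ?_, fun x hx => ?_⟩, ?_,
    fun x hx hx' => ?_⟩
  · rw [hmem] at hx
    rw [Finset.mem_range]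
    omega
  · rw [hmod, show n - q₂ * e = q₁ * e + r + 2 * e + j * e by omega, Nat.add_mul_mod_self_right]
  · rw [hmem]
    constructor
    · rintro (h | ⟨h1, h2, h3⟩)
      · omega
      · exact ⟨by omega, h3.imp_left (by omega)⟩
    · rintro ⟨h1, h3⟩
      exact Or.inr ⟨hx, by omega, h3.imp_left (by omega)⟩
  · rw [hmem]
    omega
  · exact (hmem x).2 (Or.inl ⟨hx, hx'⟩)

theorem card_sigC' {e n k r q₁ q₂ : ℕ} (he : 0 < e) (hn : n = k * e + r) (hq : q₁ + q₂ ≤ k) :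
    (sigC' (2 * e) k r q₁ q₂).card + k = n + q₁ + q₂ := by
  obtain ⟨j, rfl⟩ := Nat.exists_eq_add_of_le hq
  obtain ⟨f, rfl⟩ := Nat.exists_eq_succ_of_ne_zero he.ne'
  have hj : q₁ + q₂ + j - q₁ - q₂ = j := by omega
  have h2 : 2 * (f + 1) / 2 = f + 1 := by omega
  rw [sigC', Nat.succ_eq_add_one, hj, h2, card_strSet, hn]
  simp only [List.count_append, count_rep, one, zero, List.count_replicate, beq_self_eq_true,
    Bool.false_beq, if_true, Nat.add_sub_cancel]
  simp
  ring

theorem card_sigC {e n k r q₁ q₂ : ℕ} (he : 0 < e) (hn : n = k * e + r) (hq : q₁ + q₂ + 2 ≤ k) :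
    (sigC (2 * e) k r q₁ q₂).card + k = n + q₁ + q₂ + 1 := by
  obtain ⟨j, rfl⟩ := Nat.exists_eq_add_of_le hq
  obtain ⟨f, rfl⟩ := Nat.exists_eq_succ_of_ne_zero he.ne'
  have hj : q₁ + q₂ + 2 + j - q₁ - q₂ - 2 = j := by omega
  have h2 : 2 * (f + 1) / 2 = f + 1 := by omega
  rw [sigC, Nat.succ_eq_add_one, hj, h2, card_strSet, hn, show 2 * (f + 1) - 1 = 2 * f + 1 by omega]
  simp only [List.count_append, count_rep, one, zero, List.count_replicate, beq_self_eq_true,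
    Bool.false_beq, if_true, Nat.add_sub_cancel]
  simp
  ring

theorem vTC_sigC' {e n k r q₁ q₂ : ℕ} (hr : r < e) (hn : n = k * e + r) (hq : q₁ + q₂ ≤ k) :
    vTC (2 * e) n (sigC' (2 * e) k r q₁ q₂) = q₁ + q₂ := by
  have he : 0 < e := by omega
  obtain ⟨h1, h2, h3⟩ := sigC'_spec he hn hq
  have h4 : q₂ * e ≤ n := hn ▸ (Nat.mul_le_mul_right e (by omega)).trans (Nat.le_add_right _ _)
  rw [h2.vTC_eq he h1 h3, Nat.sub_sub_self h4, Nat.mul_div_cancel _ he, mul_comm,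
    Nat.mul_add_div he, Nat.div_eq_of_lt hr, add_zero]

theorem vTC_sigC {e n k r q₁ q₂ : ℕ} (hr : r < e) (hn : n = k * e + r) (hq : q₁ + q₂ + 2 ≤ k) :
    vTC (2 * e) n (sigC (2 * e) k r q₁ q₂) = q₁ + q₂ + 1 := by
  have he : 0 < e := by omega
  obtain ⟨h1, h2, h3, h5⟩ := sigC_spec he hn hq
  have h4 : q₂ * e ≤ n := hn ▸ (Nat.mul_le_mul_right e (by omega)).trans (Nat.le_add_right _ _)
  rw [h2.vTC_eq_of_longRun he h1 h3 (fun x hx hx' => h5 x hx' hx.ne')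
    (fun x hx => h5 x (by omega) hx.ne), Nat.sub_sub_self h4, Nat.mul_div_cancel _ he,
    mul_comm q₁, Nat.mul_add_div he, Nat.div_eq_of_lt hr]
  ring

theorem TailShape.exists_quotient {e n k r t c : ℕ} {σ : Finset ℕ} (hr : r < e)
    (hn : n = k * e + r) (h : TailShape e n σ t c) :
    ∃ q₁ q₂, t = q₁ * e + r ∧ c = n - q₂ * e ∧ q₁ + q₂ ≤ k := by
  have he : 0 < e := by omega
  have hle := h.le
  have hle' := h.le'
  have hnr : n % e = r := by rw [hn, Nat.mul_add_mod', Nat.mod_eq_of_lt hr]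
  obtain ⟨q₂, hq₂⟩ : e ∣ n - c := (Nat.modEq_iff_dvd' h.le').1 h.mod_eq'
  have ht : t = t / e * e + r := by
    rw [← hnr, ← h.mod_eq, Nat.div_add_mod']
  refine ⟨t / e, q₂, ht, by rw [mul_comm]; omega, ?_⟩
  have : (t / e + q₂) * e ≤ k * e := by rw [add_mul, mul_comm q₂]; omega
  exact Nat.le_of_mul_le_mul_right this he

theorem TailShape.eq_of_below {e n t c : ℕ} {σ σ' : Finset ℕ} (h : TailShape e n σ t c)
    (h' : TailShape e n σ' t c) (hlow : ∀ x < t, x ∈ σ ↔ x ∈ σ') : σ = σ' := by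
  ext x
  rcases Nat.lt_or_ge x t with hx | hx
  · exact hlow x hx
  · rw [h.mem_iff x hx, h'.mem_iff x hx]

theorem isCritical_evenPivot {e n k r : ℕ} (hr : r < e) (hn : n = k * e + r) (σ : Finset ℕ) :
    IsCritical {σ | σ ⊆ Finset.range (n + 1) ∧ σ ≠ Finset.range (n + 1)}
        (pivotMatching n (EvenPivot e n)) σ ↔
      (∃ q₁ q₂ : ℕ, q₁ + q₂ + 2 ≤ k ∧ σ = sigC (2 * e) k r q₁ q₂) ∨
        ∃ q₁ q₂ : ℕ, q₁ + q₂ ≤ k ∧ σ = sigC' (2 * e) k r q₁ q₂ := by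
  have he : 0 < e := by omega
  have hproper : ∀ {ρ : Finset ℕ} {t c}, TailShape e n ρ t c → ρ ≠ Finset.range (n + 1) := by
    rintro _ t c h rfl
    have := h.tail.le
    exact h.notMem (Finset.mem_range.2 (by omega))
  rw [(isPivotRule_evenPivot he n).isCritical_iff]
  constructor
  · rintro ⟨⟨hσ, hne⟩, hno⟩
    rcases exists_evenPivot_or he hσ hne with ⟨m, hm⟩ | ⟨t, ht, htσ, hlow⟩ | ⟨m, hm, hmσ, hlow⟩
    · exact absurd hm (hno m)
    · obtain ⟨c, hc⟩ := ht.exists_tailShape hσ htσ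
      obtain ⟨q₁, q₂, rfl, rfl, hq⟩ := hc.exists_quotient hr hn
      obtain ⟨-, h2, h3⟩ := sigC'_spec he hn hq
      exact Or.inr ⟨q₁, q₂, hq, hc.eq_of_below h2 fun x hx => iff_of_true (hlow x hx) (h3 x hx)⟩
    · obtain ⟨c, hc⟩ := hm.tail.exists_tailShape hσ hm.notMem
      obtain ⟨q, q₂, ht, rfl, hq⟩ := hc.exists_quotient hr hn
      have h2q : 2 ≤ q := by
        by_contra! h
        have : q * e ≤ 1 * e := Nat.mul_le_mul_right e (by omega)
        omega
      obtain ⟨q₁, rfl⟩ := Nat.exists_eq_add_of_le' h2q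
      obtain rfl : m = q₁ * e + r := by rw [add_mul] at ht; omega
      obtain ⟨-, h2, h3, h4⟩ := sigC_spec he hn (by omega : q₁ + q₂ + 2 ≤ k)
      refine Or.inl ⟨q₁, q₂, by omega, hc.eq_of_below h2 fun x hx => ?_⟩
      rcases lt_trichotomy x (q₁ * e + r) with h | rfl | h
      · exact iff_of_true (hlow x h) (h4 x hx h.ne)
      · exact iff_of_false hmσ h3
      · exact iff_of_true (hm.mem x (by omega) hx) (h4 x hx h.ne')
  · rintro (⟨q₁, q₂, hq, rfl⟩ | ⟨q₁, q₂, hq, rfl⟩)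
    · obtain ⟨h1, h2, h3, h4⟩ := sigC_spec he hn hq
      refine ⟨⟨h1, hproper h2⟩, not_evenPivot_of_longRun he
        ⟨h2.tail, h2.notMem, by omega, fun x hx hx' => h4 x hx' (by omega)⟩
        fun x hx => h4 x (by omega) hx.ne⟩
    · obtain ⟨h1, h2, h3⟩ := sigC'_spec he hn hq
      exact ⟨⟨h1, hproper h2⟩, not_evenPivot_of_tail he h2.tail h3⟩

/--
The precise matching of affine type `C̃_n` (Theorem `thm:matching-tCn`):
an acyclic matching on the family of proper subsets of the path `{0, …, n}`,
weighted with respect to the `C̃`-weight, whose critical cells for `d` odd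
consist of the single simplex `{0, …, n-1}` and for `d` even (writing
`n = k·(d/2) + r`, `0 ≤ r < d/2`) are exactly the `σ_{q₁,q₂}` (`q₁+q₂ ≤ k-2`)
and `σ'_{q₁,q₂}` (`q₁+q₂ ≤ k`), with the stated cardinalities and weights; in
particular for `d` even the matching is precise:
`|σ| - v(σ) = n - k` for every critical `σ`.
-/
theorem exists_precise_matching_affineC (d n : ℕ) (hd : 2 ≤ d) (hn : 2 ≤ n) :
    ∃ M : Set (Finset ℕ × Finset ℕ),
      IsMatching {σ | σ ⊆ Finset.range (n + 1) ∧ σ ≠ Finset.range (n + 1)} M ∧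
      IsAcyclic M ∧
      IsWeighted (vTC d n) M ∧
      (d % 2 = 1 → ∀ σ : Finset ℕ,
        (IsCritical {σ | σ ⊆ Finset.range (n + 1) ∧ σ ≠ Finset.range (n + 1)} M σ ↔
          σ = Finset.range n)) ∧
      (d % 2 = 0 → ∀ k r : ℕ, r < d / 2 → n = k * (d / 2) + r →
        (∀ σ : Finset ℕ,
          (IsCritical {σ | σ ⊆ Finset.range (n + 1) ∧ σ ≠ Finset.range (n + 1)} M σ ↔
            ((∃ q₁ q₂ : ℕ, q₁ + q₂ + 2 ≤ k ∧ σ = sigC d k r q₁ q₂) ∨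
             (∃ q₁ q₂ : ℕ, q₁ + q₂ ≤ k ∧ σ = sigC' d k r q₁ q₂)))) ∧
        (∀ q₁ q₂ : ℕ, q₁ + q₂ + 2 ≤ k →
          (sigC d k r q₁ q₂).card + k = n + q₁ + q₂ + 1 ∧
          vTC d n (sigC d k r q₁ q₂) = q₁ + q₂ + 1) ∧
        (∀ q₁ q₂ : ℕ, q₁ + q₂ ≤ k →
          (sigC' d k r q₁ q₂).card + k = n + q₁ + q₂ ∧
          vTC d n (sigC' d k r q₁ q₂) = q₁ + q₂) ∧
        (∀ σ : Finset ℕ,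
          IsCritical {σ | σ ⊆ Finset.range (n + 1) ∧ σ ≠ Finset.range (n + 1)} M σ →
          (σ.card : ℤ) - (vTC d n σ : ℤ) = (n : ℤ) - (k : ℤ))) := by
  rcases Nat.mod_two_eq_zero_or_one d with heven | hodd
  · obtain ⟨e, rfl⟩ := Nat.dvd_of_mod_eq_zero heven
    have he : 0 < e := by omega
    have hrule := isPivotRule_evenPivot he n
    refine ⟨pivotMatching n (EvenPivot e n), hrule.isMatching, hrule.isAcyclic,
      isWeighted_evenPivot he, fun h => by omega, fun _ k r hr hkr => ?_⟩
    rw [Nat.mul_div_cancel_left e two_pos] at hr hkr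
    have hC := fun q₁ q₂ (hq : q₁ + q₂ + 2 ≤ k) =>
      And.intro (card_sigC he hkr hq) (vTC_sigC hr hkr hq)
    have hC' := fun q₁ q₂ (hq : q₁ + q₂ ≤ k) =>
      And.intro (card_sigC' he hkr hq) (vTC_sigC' hr hkr hq)
    refine ⟨isCritical_evenPivot hr hkr, hC, hC', fun σ hσ => ?_⟩
    rcases (isCritical_evenPivot hr hkr σ).1 hσ with ⟨q₁, q₂, hq, rfl⟩ | ⟨q₁, q₂, hq, rfl⟩
    · have := hC q₁ q₂ hq
      omega
    · have := hC' q₁ q₂ hq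
      omega
  · have hrule := isPivotRule_lastPivot n
    exact ⟨pivotMatching n (LastPivot n), hrule.isMatching, hrule.isAcyclic,
      isWeighted_lastPivot hd hodd, fun _ => isCritical_lastPivot, fun h => by omega⟩
end
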